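/- arXiv:1308.0754 — 2 statements merged into one kernel-verified Lean document; each statement's English description precedes it below -/
import Mathlib

section
/- Fix ξ > 0. There exist constants c, c′ > 0 (depending only on ξ) with the following property. Let M ∈ SL₂(ℝ) with M·i ≠ i, let Q, X satisfy 1 < X < Q/(20‖M‖), and let 0 < δ < c′·‖M‖^{-2}. Define B_{δ₁} := {h ∈ SL₂(ℝ) : ‖h‖² < 2cosh δ} and D_δ := {k_α a_s k_β : |α| < δ, |s| < δ, |β| < δ}, and for parameters Q′, ξ′, X′ define R_M(Q′,ξ′;X′) := {g ∈ SL₂(ℝ) : g·i ≠ i, gM·i ≠ i, ‖g‖ < Q′, ‖gM‖ < Q′, |θ_g − θ_{gM}| < 2ξ′/Q′², ‖g‖ > Q′/X′}. Then B_{δ₁} · R_M(Q,ξ;X) · D_δ ⊆ R_M(Q(1 + cδ‖M‖²), ξ(1 + cδX²‖M‖⁴); 2X). -/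
/-!
The angle `θ_g` is the argument of an explicit quadratic expression `W g` in the entries of `g`
(`theta_eq`), and `‖W g‖² = ‖g‖⁴ - 4`. Hence `|θ_g - θ_{gM}|` is the unoriented Euclidean angle
between `W g` and `W (g * M)` (`angDist_theta`), for which a triangle inequality is available. In terms
of the Cayley entries `α, β` of `h`, left multiplication is
`W (h g) = α² W g + β² conj (W g) + 2 α β ‖g‖²`.

For `x = h g d` with `h` in `Bdel δ` and `d` in `Ddel δ`, three facts control the passage from `g` to `x`.
* Norms: `‖h g‖²` differs from `‖h‖² ‖g‖² / 2` by at most `‖W h‖ ‖W g‖ / 2` (`fnormSq_mul`), so both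
  `‖g‖²` and `‖g M‖²` change by a factor `1 + O(δ ‖M‖²)`.
* Right multiplication by `d` turns `W g` by at most `4 ‖W d‖ / ‖g‖²` (`angle_W_mul_right`). This is
  applied to `g` with `d`, and to `g M` with `M⁻¹ d M`, whose distance from `1` is at most `‖M‖²` times
  that of `d`.
* Left multiplication by `h` multiplies the angle between `W x` and `W y` by `1 + O(δ)`, with a small
  additive error (`angle_W_mul_left`).

Together (`perturb`), an angle `A` becomes at most `A (1 + 24 δ) + 70 δ ‖M‖⁴ / ‖g‖²`, and
`‖g‖ > Q / X` turns the error into `O(δ X² ‖M‖⁴ / Q²)`.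

The enlarged window is `2 ξ (1 + c δ X² ‖M‖⁴) / (Q² (1 + c δ ‖M‖²)²)`, so the gain `c δ X² ‖M‖⁴` competes
with the loss `2 c δ ‖M‖²` from enlarging `Q`. If `X² ‖M‖² ≥ 2 + ε`, the gain wins by a definite
proportion and a large `c` absorbs the error (`budget`, `far_case`). Since `X > 1` and `‖M‖² ≥ 2`,
the remaining case forces `M` to be nearly a rotation; then `W M` is small and
`angle_W_mul_right`, applied with `d = M`, bounds the angle between `x` and `x M` outright by a small
multiple of `ξ / Q²` (`near_case`).
-/

open Matrix MeasureTheory Real Filter Topology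
open scoped MatrixGroups Pointwise

noncomputable section

/-- `SL(2,ℝ)` as the special linear group of 2×2 real matrices. -/
abbrev SL2R := Matrix.SpecialLinearGroup (Fin 2) ℝ

instance : TopologicalSpace SL2R :=
  show TopologicalSpace {A : Matrix (Fin 2) (Fin 2) ℝ // A.det = 1} from inferInstance

instance : MeasurableSpace SL2R := borel SL2R

/-- Squared Frobenius norm `‖g‖² = a² + b² + c² + d²`. -/
def fnormSq (g : SL2R) : ℝ :=
  (g : Matrix (Fin 2) (Fin 2) ℝ) 0 0 ^ 2 + (g : Matrix (Fin 2) (Fin 2) ℝ) 0 1 ^ 2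
    + (g : Matrix (Fin 2) (Fin 2) ℝ) 1 0 ^ 2 + (g : Matrix (Fin 2) (Fin 2) ℝ) 1 1 ^ 2

/-- Frobenius norm `‖g‖`. -/
def fnorm (g : SL2R) : ℝ := Real.sqrt (fnormSq g)

/-- The angle `θ_g = arg((g·i − i)/(g·i + i)) ∈ (−π, π]`; equals `0` when `g·i = i`. -/
def theta (g : SL2R) : ℝ :=
  Complex.arg ((((g • UpperHalfPlane.I : UpperHalfPlane) : ℂ) - Complex.I)
    / (((g • UpperHalfPlane.I : UpperHalfPlane) : ℂ) + Complex.I))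

/-- Distance between two angles: the distance from `a − b` to the nearest element of `2πℤ`. -/
def angDist (a b : ℝ) : ℝ := |((a - b : ℝ) : Real.Angle).toReal|

/-- Inverse hyperbolic cosine. -/
def arccosh (x : ℝ) : ℝ := Real.log (x + Real.sqrt (x ^ 2 - 1))

/-- `ℓ(M) = arccosh(‖M‖²/2)`, the hyperbolic distance from `i` to `M·i`. -/
def ell (M : SL2R) : ℝ := arccosh (fnormSq M / 2)

/-- The pair-correlation density building block `f_ξ(ℓ)`. -/
def fxi (ξ l : ℝ) : ℝ :=
  if Real.sinh l ≤ ξ then 2 / ξ ^ 2 * l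
  else if 2 * Real.sinh (l / 2) ≤ ξ then
    2 / ξ ^ 2 * (l + Real.log (1 + ξ ^ 2)
      - 2 * Real.log (Real.cosh l + Real.sqrt (Real.sinh l ^ 2 - ξ ^ 2)))
  else 2 / ξ ^ 2 * (l - Real.log (Real.cosh l + Real.sqrt (Real.sinh l ^ 2 - ξ ^ 2)))

/-- The rotation matrix `k_φ ∈ SL(2,ℝ)`. -/
def kMat (φ : ℝ) : SL2R :=
  ⟨!![Real.cos (φ / 2), Real.sin (φ / 2); -Real.sin (φ / 2), Real.cos (φ / 2)], by
    rw [Matrix.det_fin_two_of]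
    linear_combination Real.sin_sq_add_cos_sq (φ / 2)⟩

/-- The diagonal matrix `a_t ∈ SL(2,ℝ)`. -/
def aMat (t : ℝ) : SL2R :=
  ⟨!![Real.exp (t / 2), 0; 0, Real.exp (-t / 2)], by
    rw [Matrix.det_fin_two_of, ← Real.exp_add]
    norm_num
    ring⟩

/-- The ball `B_{δ₁} = {h : ‖h‖² < 2 cosh δ}`. -/
def Bdel (δ : ℝ) : Set SL2R := {h : SL2R | fnormSq h < 2 * Real.cosh δ}

/-- The small box `D_δ = {k_α a_s k_β : |α|, |s|, |β| < δ}`. -/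
def Ddel (δ : ℝ) : Set SL2R :=
  {h : SL2R | ∃ α s β : ℝ, |α| < δ ∧ |s| < δ ∧ |β| < δ ∧ h = kMat α * aMat s * kMat β}

/-- The truncated region `R_M(Q,ξ;X)`. -/
def RMX (M : SL2R) (Q ξ X : ℝ) : Set SL2R :=
  {g : SL2R | g • UpperHalfPlane.I ≠ UpperHalfPlane.I ∧
    (g * M) • UpperHalfPlane.I ≠ UpperHalfPlane.I ∧
    fnorm g < Q ∧ fnorm (g * M) < Q ∧
    angDist (theta g) (theta (g * M)) < 2 * ξ / Q ^ 2 ∧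
    Q / X < fnorm g}

open InnerProductGeometry

/-! ### Angles between complex numbers -/

/-- If `x * conj y` has positive real part, the angle is at most its tangent. -/
lemma angle_le_im_div_re {x y : ℂ} (h : 0 < (x * (starRingEnd ℂ) y).re) :
    angle x y ≤ |(x * (starRingEnd ℂ) y).im| / (x * (starRingEnd ℂ) y).re := by
  have hx : x ≠ 0 := by rintro rfl; simp at h
  have hy : y ≠ 0 := by rintro rfl; simp at h
  set z := x * (starRingEnd ℂ) y with hz
  have hxy : x / y = (((Complex.normSq y)⁻¹ : ℝ) : ℂ) * z := by
    rw [hz, div_eq_mul_inv, Complex.inv_def]; push_cast; ring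
  rw [Complex.angle_eq_abs_arg hx hy, hxy,
    Complex.arg_real_mul _ (inv_pos.2 (Complex.normSq_pos.2 hy))]
  have hlt : |z.arg| < π / 2 := Complex.abs_arg_lt_pi_div_two_iff.2 (Or.inl h)
  have htan : Real.tan |z.arg| = |z.im| / z.re := by
    rcases abs_cases z.arg with ⟨h1, h2⟩ | ⟨h1, h2⟩
    · rw [h1, Complex.tan_arg, abs_of_nonneg (Complex.arg_nonneg_iff.1 h2)]
    · rw [h1, Real.tan_neg, Complex.tan_arg, abs_of_neg (Complex.arg_neg_iff.1 h2), neg_div]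
  rw [← htan]
  exact Real.le_tan (abs_nonneg _) hlt

/-- A small perturbation `x` of a vector `y` that stays away from `0` turns by `O(‖x - y‖)`. -/
lemma angle_le_norm_sub {x y : ℂ} (hy : 1 / 2 ≤ ‖y‖) (hxy : ‖x - y‖ ≤ 1 / 4) :
    angle x y ≤ 4 * ‖x - y‖ := by
  have e : x * (starRingEnd ℂ) y = ((‖y‖ ^ 2 : ℝ) : ℂ) + (x - y) * (starRingEnd ℂ) y := by
    rw [sub_mul, Complex.mul_conj, Complex.normSq_eq_norm_sq]; ring
  set r := (x - y) * (starRingEnd ℂ) y with hr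
  have hn : ‖r‖ = ‖x - y‖ * ‖y‖ := by rw [hr, norm_mul, RCLike.norm_conj]
  have h1 := Complex.abs_re_le_norm r
  have h2 := Complex.abs_im_le_norm r
  have hre : (x * (starRingEnd ℂ) y).re = ‖y‖ ^ 2 + r.re := by rw [e, Complex.add_re, Complex.ofReal_re]
  have him : (x * (starRingEnd ℂ) y).im = r.im := by rw [e, Complex.add_im, Complex.ofReal_im, zero_add]
  have hb : ‖y‖ / 4 ≤ (x * (starRingEnd ℂ) y).re := by
    rw [hre]; nlinarith [(abs_le.1 h1).1, norm_nonneg y]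
  refine (angle_le_im_div_re (by linarith)).trans ?_
  rw [him, div_le_iff₀ (by linarith)]
  nlinarith [norm_nonneg (x - y)]

/-! ### The vector `W g` and Frobenius norms of products -/

/-- If `g gᵀ` has diagonal entries `p`, `s` and off-diagonal entry `q`, then
`W g = (p - s) - 2 i q`. It is a nonnegative real multiple of `(g·i - i) / (g·i + i)`
(see `theta_eq`), so its argument is `θ_g`, and `‖W g‖² = ‖g‖⁴ - 4`. -/
def W (g : SL2R) : ℂ :=
  ⟨g.1 0 0 ^ 2 + g.1 0 1 ^ 2 - g.1 1 0 ^ 2 - g.1 1 1 ^ 2,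
    -2 * (g.1 0 0 * g.1 1 0 + g.1 0 1 * g.1 1 1)⟩

/-- With `be`, the Cayley form of `g`: conjugating `g` into `SU(1,1)` gives a matrix whose rows are
`al g, be g` and their conjugates, up to normalization; `‖al g‖² - ‖be g‖² = 1`. -/
def al (g : SL2R) : ℂ := ⟨(g.1 0 0 + g.1 1 1) / 2, (g.1 0 1 - g.1 1 0) / 2⟩
/-- The off-diagonal Cayley entry of `g`; see `al`. -/
def be (g : SL2R) : ℂ := ⟨(g.1 0 0 - g.1 1 1) / 2, -(g.1 0 1 + g.1 1 0) / 2⟩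

lemma det_eq (g : SL2R) : g.1 0 0 * g.1 1 1 - g.1 0 1 * g.1 1 0 = 1 := by
  have := g.2
  rwa [Matrix.det_fin_two] at this

/-- Left multiplication by `h` acts on the pair `(W g, ‖g‖²)` linearly, as a Lorentz
transformation. -/
lemma W_mul (h g : SL2R) :
    W (h * g) = al h ^ 2 * W g + be h ^ 2 * (starRingEnd ℂ) (W g) + 2 * al h * be h * (fnormSq g : ℂ) := by
  apply Complex.ext <;>
  simp [W, al, be, fnormSq, pow_two, Matrix.mul_apply, Fin.sum_univ_two, -Complex.ofReal_add, -Complex.ofReal_mul, Complex.mul_re, Complex.mul_im] <;> ring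

lemma W_eq (g : SL2R) : W g = 4 * al g * be g := by
  apply Complex.ext <;> simp [W, al, be] <;> ring

lemma norm_al_sq (g : SL2R) : ‖al g‖ ^ 2 = (fnormSq g + 2) / 4 := by
  rw [← Complex.normSq_eq_norm_sq, Complex.normSq_apply]
  simp only [al, fnormSq]; linear_combination (1/2) * det_eq g

lemma norm_be_sq (g : SL2R) : ‖be g‖ ^ 2 = (fnormSq g - 2) / 4 := by
  rw [← Complex.normSq_eq_norm_sq, Complex.normSq_apply]
  simp only [be, fnormSq]; linear_combination (-1/2) * det_eq g

lemma norm_W (g : SL2R) : ‖W g‖ = 4 * ‖al g‖ * ‖be g‖ := by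
  rw [W_eq]; simp

lemma norm_W_sq (g : SL2R) : ‖W g‖ ^ 2 = fnormSq g ^ 2 - 4 := by
  rw [norm_W, mul_pow, mul_pow, norm_al_sq, norm_be_sq]; ring

lemma two_le_fnormSq (g : SL2R) : 2 ≤ fnormSq g := by
  have := norm_be_sq g
  nlinarith [sq_nonneg ‖be g‖]

lemma norm_W_lt (g : SL2R) : ‖W g‖ < fnormSq g := by
  have := norm_W_sq g
  have := two_le_fnormSq g
  nlinarith [norm_nonneg (W g)]

lemma fnormSq_le (g : SL2R) : fnormSq g ≤ 2 + ‖W g‖ := by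
  have := norm_W_sq g
  have := two_le_fnormSq g
  nlinarith [norm_nonneg (W g)]

lemma half_le_norm_W (g : SL2R) (h : 4 ≤ fnormSq g) : 3 / 4 * fnormSq g ≤ ‖W g‖ := by
  have := norm_W_sq g
  nlinarith [norm_nonneg (W g)]

/-- Hyperbolic law of cosines, with the angular factor bounded by `1`. -/
lemma fnormSq_mul (h g : SL2R) :
    |fnormSq (h * g) - fnormSq h * fnormSq g / 2| ≤ ‖W h‖ * ‖W g‖ / 2 := by
  have e : fnormSq (h * g) - fnormSq h * fnormSq g / 2 =
      (2 * (al h * (starRingEnd ℂ) (be h) * W g)).re := by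
    simp [W, al, be, fnormSq, pow_two, Matrix.mul_apply, Fin.sum_univ_two, Complex.mul_re, Complex.mul_im]
    ring
  rw [e]
  refine (Complex.abs_re_le_norm _).trans (le_of_eq ?_)
  simp [norm_W h]; ring

lemma fnormSq_mul_le (h g : SL2R) : fnormSq (h * g) ≤ fnormSq g * (1 + ‖W h‖) := by
  have h1 := (abs_le.1 (fnormSq_mul h g)).2
  have h2 := norm_W_lt g
  have h3 := fnormSq_le h
  have := two_le_fnormSq g
  nlinarith [norm_nonneg (W g), norm_nonneg (W h), mul_le_mul_of_nonneg_left h2.le (norm_nonneg (W h))]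

lemma fnormSq_mul_le' (h g : SL2R) : fnormSq (h * g) ≤ fnormSq h * (1 + ‖W g‖) := by
  have h1 := (abs_le.1 (fnormSq_mul h g)).2
  have h2 := norm_W_lt h
  have h3 := fnormSq_le g
  have := two_le_fnormSq h
  nlinarith [norm_nonneg (W g), norm_nonneg (W h), mul_le_mul_of_nonneg_left h2.le (norm_nonneg (W g))]

lemma le_fnormSq_mul (h g : SL2R) : fnormSq g * (1 - ‖W h‖ / 2) ≤ fnormSq (h * g) := by
  have h1 := (abs_le.1 (fnormSq_mul h g)).1
  have h2 := norm_W_lt g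
  have h3 := two_le_fnormSq h
  have := two_le_fnormSq g
  nlinarith [norm_nonneg (W g), norm_nonneg (W h), mul_le_mul_of_nonneg_left h2.le (norm_nonneg (W h))]

lemma le_fnormSq_mul' (h g : SL2R) : fnormSq h * (1 - ‖W g‖ / 2) ≤ fnormSq (h * g) := by
  have h1 := (abs_le.1 (fnormSq_mul h g)).1
  have h2 := norm_W_lt h
  have h3 := two_le_fnormSq g
  have := two_le_fnormSq h
  nlinarith [norm_nonneg (W g), norm_nonneg (W h), mul_le_mul_of_nonneg_left h2.le (norm_nonneg (W g))]

/-- The analogue of `‖g‖ ≤ ‖g M‖ ‖M⁻¹‖`, where `‖M⁻¹‖ = ‖M‖`. -/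
lemma div_le_fnormSq_mul (g M : SL2R) : fnormSq g / fnormSq M ≤ fnormSq (g * M) := by
  have h1 := (abs_le.1 (fnormSq_mul g M)).1
  have h2 := norm_W_lt g
  have h2' := norm_W_lt M
  have h3 := norm_W_sq M
  have := two_le_fnormSq g
  have := two_le_fnormSq M
  have h5 : fnormSq g * (fnormSq M - ‖W M‖) / 2 ≤ fnormSq (g * M) := by
    nlinarith [norm_nonneg (W M), mul_le_mul_of_nonneg_left h2.le (norm_nonneg (W M))]
  refine le_trans ?_ h5
  rw [div_le_iff₀ (by linarith)]
  have : 1 ≤ (fnormSq M - ‖W M‖) / 2 * fnormSq M := by nlinarith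
  nlinarith

/-! ### Change of the angle under multiplication -/

/-- Right multiplication by `d` turns `W g` by `O(‖W d‖ / ‖g‖²)`: the hyperbolic triangle with
vertices `i`, `g·i`, `g d·i` is thin at `i`. In the computation, the imaginary part of
`W (g * d) * conj (W g)` carries the factor `‖al g‖² - ‖be g‖² = 1`, whereas the real part
has order `‖g‖⁴`. -/
lemma angle_W_mul_right (g d : SL2R) (hg : 4 ≤ fnormSq g) (hd : ‖W d‖ ≤ 1 / 2) :
    angle (W (g * d)) (W g) ≤ 4 * ‖W d‖ / fnormSq g := by
  set p := al g * (starRingEnd ℂ) (be g) * W d with hp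
  have e : W (g * d) * (starRingEnd ℂ) (W g) =
      4 * ((‖al g‖ ^ 2 : ℝ) * p + (‖be g‖ ^ 2 : ℝ) * (starRingEnd ℂ) p
        + ((2 * ‖al g‖ ^ 2 * ‖be g‖ ^ 2 * fnormSq d : ℝ) : ℂ)) := by
    rw [W_mul, W_eq g, hp]
    have h1 : ((‖al g‖ ^ 2 : ℝ) : ℂ) = al g * (starRingEnd ℂ) (al g) := by
      rw [Complex.mul_conj, Complex.normSq_eq_norm_sq]
    have h2 : ((‖be g‖ ^ 2 : ℝ) : ℂ) = be g * (starRingEnd ℂ) (be g) := by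
      rw [Complex.mul_conj, Complex.normSq_eq_norm_sq]
    have h3 : ((2 * ‖al g‖ ^ 2 * ‖be g‖ ^ 2 * fnormSq d : ℝ) : ℂ) =
      2 * (al g * (starRingEnd ℂ) (al g)) * (be g * (starRingEnd ℂ) (be g)) * (fnormSq d : ℂ) := by
      rw [← h1, ← h2]; push_cast; ring
    rw [h1, h2, h3]
    simp only [map_mul, Complex.conj_conj, map_ofNat]
    ring
  have hn : ‖p‖ = ‖W g‖ / 4 * ‖W d‖ := by
    rw [hp, norm_mul, norm_mul, RCLike.norm_conj, norm_W g]; ring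
  have hre : (W (g * d) * (starRingEnd ℂ) (W g)).re =
      2 * fnormSq g * p.re + ‖W g‖ ^ 2 * fnormSq d / 2 := by
    rw [e, norm_W g]
    simp only [Complex.mul_re, Complex.add_re, Complex.ofReal_re, Complex.ofReal_im, Complex.conj_re,
      Complex.re_ofNat, Complex.im_ofNat]
    rw [norm_al_sq, norm_be_sq, mul_pow, mul_pow, norm_al_sq, norm_be_sq]; ring
  have him : (W (g * d) * (starRingEnd ℂ) (W g)).im = 4 * p.im := by
    rw [e]
    simp only [Complex.mul_im, Complex.add_im, Complex.ofReal_re, Complex.ofReal_im, Complex.conj_im,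
      Complex.re_ofNat, Complex.im_ofNat]
    rw [norm_al_sq, norm_be_sq]; ring
  have h1 := (abs_le.1 (Complex.abs_re_le_norm p)).1
  have h2 := Complex.abs_im_le_norm p
  have h3 := half_le_norm_W g hg
  have h4 := two_le_fnormSq d
  have h0 := norm_nonneg (W d)
  have hw : 0 < ‖W g‖ := by linarith
  have hb : ‖W g‖ * fnormSq g / 4 ≤ (W (g * d) * (starRingEnd ℂ) (W g)).re := by
    rw [hre]
    have h5 : 2 * fnormSq g * (-(‖W g‖ / 4 * (1 / 2))) ≤ 2 * fnormSq g * p.re := by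
      apply mul_le_mul_of_nonneg_left _ (by linarith)
      have : ‖W g‖ / 4 * ‖W d‖ ≤ ‖W g‖ / 4 * (1 / 2) := by gcongr
      linarith
    have h6 : ‖W g‖ ^ 2 * 1 ≤ ‖W g‖ ^ 2 * fnormSq d / 2 := by nlinarith [sq_nonneg ‖W g‖]
    nlinarith
  have hpos : 0 < ‖W g‖ * fnormSq g / 4 := by positivity
  refine (angle_le_im_div_re (hpos.trans_le hb)).trans ?_
  have : |(W (g * d) * (starRingEnd ℂ) (W g)).im| ≤ ‖W g‖ * ‖W d‖ := by
    rw [him, abs_mul, abs_of_pos (by norm_num : (0:ℝ) < 4)]; linarith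
  calc _ ≤ (‖W g‖ * ‖W d‖) / (‖W g‖ * fnormSq g / 4) := by gcongr
    _ = _ := by field_simp

/-- Left multiplication by `h` multiplies the angle between `W x` and `W y` by at most `1 + O(δ)`,
up to an additive error coming from the radii of `x` and `y`. Only `‖al h‖ ‖be h‖` has to be small,
so `h` may be close to any rotation, not only to the identity. -/
lemma angle_W_mul_left (h x y : SL2R) (hx : 100 ≤ fnormSq x) (hy : 100 ≤ fnormSq y)
    (δ : ℝ) (hδ0 : 0 < δ) (hδ : δ ≤ 1 / 100) (hh : ‖W h‖ ≤ 4 * δ) :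
    angle (W (h * x)) (W (h * y)) ≤
      angle (W x) (W y) * (1 + 24 * δ)
        + 64 * δ * (1 / fnormSq x ^ 2 + 1 / fnormSq y ^ 2) := by
  -- `V` is the conjugate direction of `W g` and `κ = ‖g‖² / ‖W g‖`; in these terms left
  -- multiplication by `h` is multiplication of `W g` by a factor that depends only on `V` and `κ`.
  have key : ∀ g : SL2R, 100 ≤ fnormSq g → ∃ V : ℂ, ∃ κ : ℝ, ‖V‖ = 1 ∧ 1 ≤ κ ∧
      κ - 1 ≤ 4 / fnormSq g ^ 2 ∧ V * W g = (‖W g‖ : ℂ) ∧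
      W (h * g) = W g * (al h ^ 2 + be h ^ 2 * V ^ 2 + 2 * al h * be h * (κ * V)) := by
    intro g hg
    have h1 := half_le_norm_W g (by linarith)
    have hw : 0 < ‖W g‖ := by linarith
    have hw0 : W g ≠ 0 := norm_pos_iff.1 hw
    have hwc : (‖W g‖ : ℂ) ≠ 0 := by exact_mod_cast hw.ne'
    refine ⟨(‖W g‖ : ℂ) / W g, fnormSq g / ‖W g‖, ?_, ?_, ?_, ?_, ?_⟩
    · rw [norm_div, Complex.norm_real, norm_norm, div_self hw.ne']
    · rw [le_div_iff₀ hw]; linarith [norm_W_lt g]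
    · have h2 := norm_W_sq g
      have h3 := norm_W_lt g
      rw [div_sub_one hw.ne', div_le_div_iff₀ hw (by positivity)]
      have h4 : (fnormSq g - ‖W g‖) * (fnormSq g + ‖W g‖) = 4 := by linarith
      nlinarith [mul_le_mul_of_nonneg_left h1 (sub_pos.2 h3).le]
    · field_simp
    · rw [W_mul]
      have h5 : (starRingEnd ℂ) (W g) = (‖W g‖ : ℂ) ^ 2 / W g := by
        rw [eq_div_iff hw0, mul_comm, Complex.mul_conj, Complex.normSq_eq_norm_sq]; push_cast; ring
      rw [h5]; push_cast; field_simp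
  obtain ⟨V, κ, hV, hκ1, hκ, hVW, hF⟩ := key x hx
  obtain ⟨V', κ', hV', hκ1', hκ', hVW', hF'⟩ := key y hy
  set F := al h ^ 2 + be h ^ 2 * V ^ 2 + 2 * al h * be h * (κ * V) with hFd
  set F' := al h ^ 2 + be h ^ 2 * V' ^ 2 + 2 * al h * be h * (κ' * V') with hFd'
  have hx0 : W x ≠ 0 := norm_pos_iff.1 (by linarith [half_le_norm_W x (by linarith)])
  have hy0 : W y ≠ 0 := norm_pos_iff.1 (by linarith [half_le_norm_W y (by linarith)])
  have hab : ‖al h‖ * ‖be h‖ ≤ δ := by have := norm_W h; linarith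
  have ha1 : 1 ≤ ‖al h‖ ^ 2 := by rw [norm_al_sq]; linarith [two_le_fnormSq h]
  have hba : ‖be h‖ ^ 2 ≤ ‖al h‖ ^ 2 := by rw [norm_al_sq, norm_be_sq]; linarith
  have hba' : ‖be h‖ ≤ ‖al h‖ := (sq_le_sq₀ (norm_nonneg _) (norm_nonneg _)).1 hba
  have hb2 : ‖be h‖ ^ 2 ≤ δ := by nlinarith [norm_nonneg (be h)]
  -- The chord between two unit vectors is at most the angle between them.
  have hVV : ‖V - V'‖ ≤ angle (W x) (W y) := by
    refine (Complex.norm_sub_le_angle hV hV').trans (le_of_eq ?_)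
    have n1 : V ≠ 0 := norm_pos_iff.1 (by rw [hV]; norm_num)
    have n2 : V' ≠ 0 := norm_pos_iff.1 (by rw [hV']; norm_num)
    have px := norm_pos_iff.2 hx0
    have py := norm_pos_iff.2 hy0
    have : V / V' = ((‖W x‖ / ‖W y‖ : ℝ) : ℂ) * (W y / W x) := by
      push_cast
      rw [← hVW, ← hVW']; field_simp
    rw [Complex.angle_eq_abs_arg n1 n2, this, Complex.arg_real_mul _ (by positivity),
      ← Complex.angle_eq_abs_arg hy0 hx0, angle_comm]
  have hx2 : 4 / fnormSq x ^ 2 ≤ 4 / 10000 := by gcongr; nlinarith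
  have hy2 : 4 / fnormSq y ^ 2 ≤ 4 / 10000 := by gcongr; nlinarith
  have hVV2 : ‖V - V'‖ ≤ 2 := by
    calc _ ≤ ‖V‖ + ‖V'‖ := norm_sub_le _ _
      _ = 2 := by rw [hV, hV']; norm_num
  have hs : ‖V ^ 2 - V' ^ 2‖ ≤ 2 * ‖V - V'‖ := by
    rw [sq_sub_sq, norm_mul]
    have : ‖V + V'‖ ≤ 2 := by
      calc _ ≤ ‖V‖ + ‖V'‖ := norm_add_le _ _
        _ = 2 := by rw [hV, hV']; norm_num
    gcongr
  set E := 4 / fnormSq x ^ 2 + 4 / fnormSq y ^ 2 with hE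
  have hκκ : ‖(κ : ℂ) * V - κ' * V'‖ ≤ 2 * ‖V - V'‖ + E := by
    have : (κ : ℂ) * V - κ' * V' = (κ : ℂ) * (V - V') + ((κ - κ' : ℝ) : ℂ) * V' := by push_cast; ring
    rw [this]
    refine (norm_add_le _ _).trans ?_
    rw [norm_mul, norm_mul, hV', Complex.norm_real, Complex.norm_real, Real.norm_eq_abs,
      Real.norm_eq_abs, abs_of_pos (by linarith : 0 < κ), mul_one]
    have : |κ - κ'| ≤ E := abs_le.2 ⟨by linarith [show 0 ≤ 4 / fnormSq x ^ 2 by positivity], by linarith [show 0 ≤ 4 / fnormSq y ^ 2 by positivity]⟩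
    have : κ * ‖V - V'‖ ≤ 2 * ‖V - V'‖ := by gcongr; linarith
    linarith
  have hFF : ‖F - F'‖ ≤ δ * (6 * ‖V - V'‖ + 2 * E) := by
    have : F - F' = be h ^ 2 * (V ^ 2 - V' ^ 2) + 2 * (al h * be h) * ((κ : ℂ) * V - κ' * V') := by
      rw [hFd, hFd']; ring
    rw [this]
    refine (norm_add_le _ _).trans ?_
    simp only [norm_mul, norm_pow, Complex.norm_ofNat]
    have i1 : ‖be h‖ ^ 2 * ‖V ^ 2 - V' ^ 2‖ ≤ δ * (2 * ‖V - V'‖) := by gcongr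
    have i2 : 2 * (‖al h‖ * ‖be h‖) * ‖(κ : ℂ) * V - κ' * V'‖ ≤ 2 * δ * (2 * ‖V - V'‖ + E) := by
      gcongr
    linarith
  have hF2 : 1 / 2 ≤ ‖F'‖ := by
    have i1 : ‖be h ^ 2 * V' ^ 2 + 2 * (al h * be h) * (κ' * V')‖ ≤ δ * 1 + 2 * δ * (2 * 1) := by
      refine (norm_add_le _ _).trans ?_
      simp only [norm_mul, norm_pow, Complex.norm_ofNat, hV', Complex.norm_real, Real.norm_eq_abs,
        abs_of_pos (by linarith : 0 < κ')]
      have : κ' ≤ 2 := by linarith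
      rw [one_pow]
      gcongr
    have i2 : al h ^ 2 = F' - (be h ^ 2 * V' ^ 2 + 2 * (al h * be h) * (κ' * V')) := by
      rw [hFd']; ring
    have i3 : ‖al h‖ ^ 2 ≤ ‖F'‖ + ‖be h ^ 2 * V' ^ 2 + 2 * (al h * be h) * (κ' * V')‖ := by
      rw [← norm_pow]; nth_rewrite 1 [i2]; exact norm_sub_le _ _
    linarith
  have hEb : E ≤ 8 / 10000 := by rw [hE]; linarith
  have hFs : ‖F - F'‖ ≤ 1 / 4 := by nlinarith
  -- Common factors drop out of the angle, so only the angle between `F` and `F'` is new.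
  have hang := angle_le_norm_sub hF2 hFs
  have hF'0 : F' ≠ 0 := norm_pos_iff.1 (by linarith)
  have hF0 : F ≠ 0 := by
    intro h0; rw [h0, zero_sub, norm_neg] at hFs; linarith
  have t := angle_le_angle_add_angle (W x * F) (W y * F) (W y * F')
  have t1 : angle (W x * F) (W y * F) = angle (W x) (W y) := by
    exact Complex.angle_mul_right hF0 _ _
  have t2 : angle (W y * F) (W y * F') = angle F F' := by
    exact Complex.angle_mul_left hy0 _ _
  rw [hF, hF']
  rw [t1, t2] at t
  have f1 : δ * (6 * ‖V - V'‖) ≤ δ * (6 * angle (W x) (W y)) := by gcongr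
  have hE' : E = 4 * (1 / fnormSq x ^ 2 + 1 / fnormSq y ^ 2) := by rw [hE]; ring
  have hEn : 0 ≤ δ * E := by positivity
  have : 64 * δ * (1 / fnormSq x ^ 2 + 1 / fnormSq y ^ 2) = 16 * (δ * E) := by rw [hE']; ring
  nlinarith

/-! ### The action on `i` -/

lemma fnormSq_ne (g : SL2R) (h : 2 < fnormSq g) : g • UpperHalfPlane.I ≠ UpperHalfPlane.I := by
  intro e
  have e2 := congrArg (fun z : UpperHalfPlane => (z : ℂ)) e
  simp only [UpperHalfPlane.coe_specialLinearGroup_apply, UpperHalfPlane.coe_I] at e2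
  rw [div_eq_iff] at e2
  · have r := congrArg Complex.re e2
    have i := congrArg Complex.im e2
    simp at r i
    have := det_eq g
    simp only [fnormSq] at h
    rw [r, i] at h this
    nlinarith
  · intro h0
    have r := congrArg Complex.re h0
    have i := congrArg Complex.im h0
    simp at r i
    have := det_eq g
    rw [r, i] at this
    norm_num at this

/-- With `j = c i + d` one has `g·i - i = 2 i β / j` and `g·i + i = 2 i (conj α) / j`, so the quotient
is `β / conj α`, a positive multiple of `4 α β = W g`. -/
lemma theta_eq (g : SL2R) : theta g = (W g).arg := by
  have hdet := det_eq g
  have hden : ((g.1 1 0 : ℝ) : ℂ) * Complex.I + (g.1 1 1 : ℝ) ≠ 0 := by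
    intro h0
    have r := congrArg Complex.re h0
    have i := congrArg Complex.im h0
    simp at r i
    rw [r, i] at hdet
    norm_num at hdet
  have hal : al g ≠ 0 := by
    apply norm_pos_iff.1
    have := norm_al_sq g
    have := two_le_fnormSq g
    by_contra hc
    have : ‖al g‖ = 0 := le_antisymm (not_lt.1 hc) (norm_nonneg _)
    nlinarith
  have hact : ((g • UpperHalfPlane.I : UpperHalfPlane) : ℂ) =
      (((g.1 0 0 : ℝ) : ℂ) * Complex.I + (g.1 0 1 : ℝ)) /
        (((g.1 1 0 : ℝ) : ℂ) * Complex.I + (g.1 1 1 : ℝ)) := by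
    rw [UpperHalfPlane.coe_specialLinearGroup_apply]; rfl
  have e1 : ((g • UpperHalfPlane.I : UpperHalfPlane) : ℂ) - Complex.I =
      2 * Complex.I * be g / (((g.1 1 0 : ℝ) : ℂ) * Complex.I + (g.1 1 1 : ℝ)) := by
    rw [hact, eq_div_iff hden, sub_mul,
      div_mul_cancel₀ _ hden]
    apply Complex.ext <;> simp [be] <;> ring
  have e2 : ((g • UpperHalfPlane.I : UpperHalfPlane) : ℂ) + Complex.I =
      2 * Complex.I * (starRingEnd ℂ) (al g) / (((g.1 1 0 : ℝ) : ℂ) * Complex.I + (g.1 1 1 : ℝ)) := by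
    rw [hact, eq_div_iff hden, add_mul,
      div_mul_cancel₀ _ hden]
    apply Complex.ext <;> simp [al] <;> ring
  have hc : (starRingEnd ℂ) (al g) ≠ 0 := by simpa using hal
  have e3 : be g / (starRingEnd ℂ) (al g) = (((4 * Complex.normSq (al g))⁻¹ : ℝ) : ℂ) * W g := by
    rw [W_eq]; push_cast; rw [← Complex.mul_conj]; field_simp
  rw [theta, e1, e2, div_div_div_cancel_right₀ hden, mul_div_mul_left _ _ (by simp), e3,
    Complex.arg_real_mul]
  have := Complex.normSq_pos.2 hal
  positivity

lemma angDist_theta (g g' : SL2R) (hg : 2 < fnormSq g) (hg' : 2 < fnormSq g') :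
    angDist (theta g) (theta g') = angle (W g) (W g') := by
  have h0 : ∀ x : SL2R, 2 < fnormSq x → W x ≠ 0 := by
    intro x hx h0
    have := norm_W_sq x
    rw [h0] at this; simp at this; nlinarith
  rw [Complex.angle_eq_abs_arg (h0 g hg) (h0 g' hg'), angDist, theta_eq, theta_eq, Real.Angle.coe_sub,
    ← Complex.arg_div_coe_angle (h0 g hg) (h0 g' hg'), Complex.arg_coe_angle_toReal_eq_arg]

/-! ### Elements near the identity -/

/-- Squared Frobenius norm of a real `2 × 2` matrix. -/
def frob (A : Matrix (Fin 2) (Fin 2) ℝ) : ℝ := A 0 0 ^ 2 + A 0 1 ^ 2 + A 1 0 ^ 2 + A 1 1 ^ 2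

/-- Squared Frobenius distance from `g` to the identity. -/
def dev (g : SL2R) : ℝ := frob (g.1 - 1)

lemma norm_W_le_dev (g : SL2R) (h : dev g ≤ 2) : ‖W g‖ ^ 2 ≤ 16 * dev g := by
  have h1 : fnormSq g ≤ 2 + 2 * dev g := by
    have := det_eq g
    simp [fnormSq, dev, frob]
    nlinarith [sq_nonneg (g.1 0 0 + g.1 1 1 - 2), sq_nonneg (g.1 0 1 - g.1 1 0)]
  have := two_le_fnormSq g
  rw [norm_W_sq]
  nlinarith

lemma frob_mul (A B : Matrix (Fin 2) (Fin 2) ℝ) : frob (A * B) ≤ frob A * frob B := by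
  simp only [frob, Matrix.mul_apply, Fin.sum_univ_two]
  nlinarith [sq_nonneg (A 0 0 * B 1 0 - A 0 1 * B 0 0), sq_nonneg (A 0 0 * B 1 1 - A 0 1 * B 0 1),
    sq_nonneg (A 1 0 * B 1 0 - A 1 1 * B 0 0), sq_nonneg (A 1 0 * B 1 1 - A 1 1 * B 0 1)]

/-- `‖M⁻¹ d M - 1‖ ≤ ‖M⁻¹‖ ‖d - 1‖ ‖M‖`, and `‖M⁻¹‖ = ‖M‖` in `SL₂`. -/
lemma dev_conj (M d : SL2R) : dev (M⁻¹ * d * M) ≤ fnormSq M ^ 2 * dev d := by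
  have e : (M⁻¹ * d * M).1 - 1 = M⁻¹.1 * (d.1 - 1) * M.1 := by
    have h : M⁻¹.1 * M.1 = 1 := congrArg Subtype.val (inv_mul_cancel M)
    rw [mul_sub, sub_mul, mul_one, h]; rfl
  have hinv : frob M⁻¹.1 = fnormSq M := by
    rw [Matrix.SpecialLinearGroup.SL2_inv_expl]
    simp [frob, fnormSq]; ring
  have h0 : 0 ≤ frob M.1 := by unfold frob; positivity
  calc dev (M⁻¹ * d * M) = frob (M⁻¹.1 * (d.1 - 1) * M.1) := by rw [dev, e]
    _ ≤ frob M⁻¹.1 * frob (d.1 - 1) * frob M.1 :=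
      (frob_mul _ _).trans (mul_le_mul_of_nonneg_right (frob_mul _ _) h0)
    _ = fnormSq M * dev d * fnormSq M := by rw [hinv]; rfl
    _ = _ := by ring

lemma dev_Ddel {δ : ℝ} {d : SL2R} (hδ : δ ≤ 1) (hd : d ∈ Ddel δ) : dev d ≤ 8 * δ ^ 2 := by
  obtain ⟨α, s, β, hα, hs, hβ, rfl⟩ := hd
  have hs2 : s ^ 2 ≤ δ ^ 2 := sq_le_sq' (by linarith [(abs_lt.1 hs).1]) (abs_lt.1 hs).2.le
  have hδ0 : 0 < δ := (abs_nonneg s).trans_lt hs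
  have hαβ : ((α + β) / 2) ^ 2 ≤ δ ^ 2 := by
    have := abs_lt.1 hα
    have := abs_lt.1 hβ
    exact sq_le_sq' (by linarith) (by linarith)
  -- Only `α + β` matters, because the Frobenius norm is invariant under conjugation by rotations.
  have e : dev (kMat α * aMat s * kMat β) =
      2 * Real.cosh (s / 2) * (2 * Real.cosh (s / 2) - 2 * Real.cos ((α + β) / 2)) := by
    have hp : Real.exp (s / 2) * Real.exp (-s / 2) = 1 := by
      rw [← Real.exp_add]; norm_num; ring
    have h1 := Real.sin_sq_add_cos_sq (α / 2)
    have h2 := Real.sin_sq_add_cos_sq (β / 2)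
    have h3 : Real.cos ((α + β) / 2) =
      Real.cos (α / 2) * Real.cos (β / 2) - Real.sin (α / 2) * Real.sin (β / 2) := by
      rw [← Real.cos_add]; ring_nf
    have h4 : 2 * Real.cosh (s / 2) = Real.exp (s / 2) + Real.exp (-s / 2) := by
      rw [Real.cosh_eq, neg_div]; ring
    rw [h4, h3]
    have hv : (kMat α * aMat s * kMat β).1 = (kMat α).1 * (aMat s).1 * (kMat β).1 := rfl
    rw [dev, hv]
    simp [frob, kMat, aMat]
    generalize Real.exp (s / 2) = p at *
    generalize Real.exp (-s / 2) = q at *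
    generalize Real.sin (α / 2) = sa at *
    generalize Real.cos (α / 2) = ca at *
    generalize Real.sin (β / 2) = sb at *
    generalize Real.cos (β / 2) = cb at *
    linear_combination (p ^ 2 + q ^ 2) * (sb ^ 2 + cb ^ 2) * h1 + (p ^ 2 + q ^ 2) * h2 - 2 * hp
  have hc : Real.cosh (s / 2) ≤ 1 + s ^ 2 / 4 := by
    have h1 := Real.cosh_le_exp_half_sq (s / 2)
    have h2 : |(s / 2) ^ 2 / 2| = s ^ 2 / 8 := by rw [abs_of_nonneg (by positivity)]; ring
    have h3 := abs_le.1 (Real.abs_exp_sub_one_le (x := (s / 2) ^ 2 / 2) (by rw [h2]; nlinarith))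
    rw [h2] at h3
    linarith
  have hcos := Real.one_sub_sq_div_two_le_cos (x := (α + β) / 2)
  have h1 := Real.one_le_cosh (s / 2)
  rw [e]
  have h2 : 2 * Real.cosh (s / 2) - 2 * Real.cos ((α + β) / 2) ≤ 3 / 2 * δ ^ 2 := by linarith
  have h3 : 2 * Real.cosh (s / 2) ≤ 5 / 2 := by nlinarith
  have h4 : 0 ≤ 2 * Real.cosh (s / 2) - 2 * Real.cos ((α + β) / 2) := by
    linarith [Real.cos_le_one ((α + β) / 2)]
  nlinarith [mul_le_mul h3 h2 h4 (by norm_num)]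

lemma norm_W_Bdel {δ : ℝ} {h : SL2R} (h0 : 0 < δ) (hδ : δ ≤ 1) (hh : h ∈ Bdel δ) : ‖W h‖ ≤ 4 * δ := by
  have h1 : fnormSq h < 2 * Real.cosh δ := hh
  have h2 := two_le_fnormSq h
  have h3 := norm_W_sq h
  have h4 := Real.cosh_sq δ
  have h5 : Real.sinh δ ≤ 2 * δ := by
    have a := abs_le.1 (Real.abs_exp_sub_one_le (x := δ) (by rw [abs_of_pos h0]; exact hδ))
    have b := abs_le.1 (Real.abs_exp_sub_one_le (x := -δ) (by rw [abs_neg, abs_of_pos h0]; exact hδ))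
    rw [abs_neg, abs_of_pos h0] at b
    rw [abs_of_pos h0] at a
    rw [Real.sinh_eq]; linarith
  have h6 : 0 < Real.sinh δ := Real.sinh_pos_iff.2 h0
  have : ‖W h‖ ^ 2 ≤ (4 * δ) ^ 2 := by nlinarith
  exact (sq_le_sq₀ (norm_nonneg _) (by linarith)).1 this

/-! ### The combined perturbation -/

set_option maxHeartbeats 1000000 in
/-- Effect of `g ↦ h g d` on the data that define `RMX`. The right factor acts on `g M` through
`h g d M = h (g M) (M⁻¹ d M)`, which is where the powers of `‖M‖²` come from. -/
lemma perturb (M g h d : SL2R) (δ : ℝ) (hδ0 : 0 < δ) (hδ : δ * fnormSq M ≤ 1 / 200)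
    (hN : 400 * fnormSq M ≤ fnormSq g) (hh : h ∈ Bdel δ) (hd : d ∈ Ddel δ) :
    fnormSq (h * g * d) ≤ fnormSq g * (1 + 12 * (δ * fnormSq M)) ^ 2 ∧
    fnormSq (h * g * d * M) ≤ fnormSq (g * M) * (1 + 12 * (δ * fnormSq M)) ^ 2 ∧
    9 / 10 * fnormSq g ≤ fnormSq (h * g * d) ∧
    angle (W (h * g * d)) (W (h * g * d * M)) ≤
      angle (W g) (W (g * M)) * (1 + 24 * δ) + 70 * δ * fnormSq M ^ 2 / fnormSq g := by
  set m := fnormSq M with hm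
  set N := fnormSq g with hNd
  have hm2 : 2 ≤ m := two_le_fnormSq M
  have hδm : 2 * δ ≤ δ * m := by nlinarith
  set d' := M⁻¹ * d * M with hd'
  have e1 : h * g * d = h * (g * d) := mul_assoc _ _ _
  have e2 : h * g * d * M = h * (g * M * d') := by rw [hd']; group
  have hdev := dev_Ddel (by linarith) hd
  have hdev' : dev d' ≤ m ^ 2 * (8 * δ ^ 2) :=
    (dev_conj M d).trans (mul_le_mul_of_nonneg_left hdev (sq_nonneg _))
  have hWh : ‖W h‖ ≤ 4 * δ := norm_W_Bdel hδ0 (by linarith) hh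
  have hWd : ‖W d‖ ≤ 12 * δ := by
    refine (sq_le_sq₀ (norm_nonneg _) (by linarith)).1 ?_
    have := norm_W_le_dev d (by nlinarith)
    nlinarith
  have hWd' : ‖W d'‖ ≤ 12 * (δ * m) := by
    refine (sq_le_sq₀ (norm_nonneg _) (by linarith)).1 ?_
    have := norm_W_le_dev d' (by nlinarith)
    nlinarith
  have hn : 0 < N := by linarith
  have hgM : N / m ≤ fnormSq (g * M) := div_le_fnormSq_mul g M
  have hNm : 400 ≤ N / m := by rw [le_div_iff₀ (by linarith)]; exact hN
  have hgd1 := fnormSq_mul_le' g d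
  have hgd2 := le_fnormSq_mul' g d
  have hgM1 := fnormSq_mul_le' (g * M) d'
  have hgM2 := le_fnormSq_mul' (g * M) d'
  set N' := fnormSq (g * M) with hN'
  have hn' : 0 < N' := by linarith
  have lo1 : 95 / 100 * N ≤ fnormSq (g * d) := by nlinarith
  have lo2 : 95 / 100 * N' ≤ fnormSq (g * M * d') := by nlinarith
  have hi : ∀ y : SL2R, ∀ r : ℝ, 0 < r → fnormSq y ≤ r * (1 + 12 * (δ * m)) →
      fnormSq (h * y) ≤ r * (1 + 12 * (δ * m)) ^ 2 := by
    intro y r hr hy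
    have := fnormSq_mul_le h y
    have i1 : fnormSq y * (1 + ‖W h‖) ≤ (r * (1 + 12 * (δ * m))) * (1 + 12 * (δ * m)) := by
      apply mul_le_mul hy (by linarith) (by positivity) (by nlinarith)
    nlinarith
  refine ⟨?_, ?_, ?_, ?_⟩
  · rw [e1]
    refine hi _ _ hn (hgd1.trans ?_)
    gcongr
    linarith
  · rw [e2]
    refine hi _ _ hn' (hgM1.trans ?_)
    gcongr
  · rw [e1]
    have := le_fnormSq_mul h (g * d)
    nlinarith
  · rw [e2, e1]
    have a0 := angle_W_mul_left h (g * d) (g * M * d') (by linarith) (by linarith) δ hδ0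
      (by linarith) hWh
    have a1 := angle_W_mul_right g d (by linarith) (by linarith)
    have a2 := angle_W_mul_right (g * M) d' (by linarith) (by linarith)
    have t1 := angle_le_angle_add_angle (W (g * d)) (W g) (W (g * M * d'))
    have t2 := angle_le_angle_add_angle (W g) (W (g * M)) (W (g * M * d'))
    rw [angle_comm (W (g * M)) (W (g * M * d'))] at t2
    set P := δ * m ^ 2 / N with hP
    have hP0 : 0 < P := by positivity
    have b1 : 4 * ‖W d‖ / N ≤ 12 * P := by
      rw [hP, div_le_iff₀ hn]
      have : 12 * (δ * m ^ 2 / N) * N = 12 * (δ * m ^ 2) := by field_simp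
      rw [this]; nlinarith
    have b2 : 4 * ‖W d'‖ / N' ≤ 48 * P := by
      calc 4 * ‖W d'‖ / N' ≤ 4 * (12 * (δ * m)) / (N / m) := by gcongr
        _ = 48 * P := by rw [hP]; field_simp; ring
    have b3 : 1 / fnormSq (g * d) ^ 2 ≤ 1 / (N / (2 * m)) ^ 2 := by
      have : N / (2 * m) ≤ 95 / 100 * N := by
        rw [div_le_iff₀ (by linarith)]
        linarith [mul_le_mul_of_nonneg_left hm2 hn.le]
      have : 0 < N / (2 * m) := by positivity
      gcongr
      linarith
    have b4 : 1 / fnormSq (g * M * d') ^ 2 ≤ 1 / (N / (2 * m)) ^ 2 := by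
      have : N / (2 * m) = N / m / 2 := by field_simp
      have : 0 < N / (2 * m) := by positivity
      gcongr
      linarith
    have b5 : 64 * δ * (1 / (N / (2 * m)) ^ 2 + 1 / (N / (2 * m)) ^ 2) ≤ P := by
      have : 64 * δ * (1 / (N / (2 * m)) ^ 2 + 1 / (N / (2 * m)) ^ 2) = P * (512 / N) := by
        rw [hP]; field_simp; ring
      rw [this]
      have : 512 / N ≤ 1 := by rw [div_le_one hn]; linarith
      exact mul_le_of_le_one_right hP0.le this
    have b6 : 64 * δ * (1 / fnormSq (g * d) ^ 2 + 1 / fnormSq (g * M * d') ^ 2) ≤ P :=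
      le_trans (by gcongr) b5
    have b7 : 70 * δ * m ^ 2 / N = 70 * P := by rw [hP]; ring
    rw [b7]
    have b8 : angle (W (g * d)) (W (g * M * d')) ≤ angle (W g) (W (g * M)) + 60 * P := by linarith
    have b9 : angle (W (g * d)) (W (g * M * d')) * (1 + 24 * δ) ≤
      (angle (W g) (W (g * M)) + 60 * P) * (1 + 24 * δ) := by gcongr
    nlinarith

/-! ### Comparison with the enlarged angular window -/

/-- When `‖M‖² X² ≥ 2 + ε`, the gain `c δ X² ‖M‖⁴` exceeds the loss `2 c δ ‖M‖²` from enlarging `Q`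
by a definite proportion, which absorbs the error `K δ X² ‖M‖⁴` once `c` is large.
Here `m` stands for `‖M‖²`. -/
lemma budget {ξ ε c K δ m X : ℝ} (hξ : 0 < ξ) (hε : 0 < ε) (hε1 : ε ≤ 1) (hK : 0 < K)
    (hc : c * ξ * ε = 24 * K) (hδ : 0 < δ) (hm : 0 < m) (ht : c * δ * m ≤ ε / 2)
    (hX : 2 + ε ≤ m * X ^ 2) :
    (ξ + K * δ * (X ^ 2 * m ^ 2)) * (1 + c * δ * m) ^ 2 ≤ ξ * (1 + c * δ * X ^ 2 * m ^ 2) := by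
  have hc0 : 0 < c := by
    by_contra h
    have : c * (ξ * ε) ≤ 0 := mul_nonpos_of_nonpos_of_nonneg (not_lt.1 h) (by positivity)
    nlinarith
  set t := c * δ * m with htd
  have ht0 : 0 < t := by positivity
  set Y := X ^ 2 * m ^ 2 with hY
  have hYm : m * (2 + ε) ≤ Y := by rw [hY]; nlinarith
  have hY0 : 0 < Y := lt_of_lt_of_le (by positivity) hYm
  have s1 : (1 + t) ^ 2 ≤ 1 + (2 + ε / 2) * t := by nlinarith
  have s2 : (1 + t) ^ 2 ≤ 4 := by nlinarith
  have s3 : ξ * (1 + t) ^ 2 ≤ ξ * (1 + (2 + ε / 2) * t) := by gcongr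
  have s4 : K * δ * Y * (1 + t) ^ 2 ≤ K * δ * Y * 4 := by gcongr
  have s5 : (2 + ε / 2) * m ≤ (1 - ε / 6) * Y := by
    have : (1 - ε / 6) * (m * (2 + ε)) ≤ (1 - ε / 6) * Y := by gcongr; linarith
    nlinarith [mul_pos hm hε]
  have s6 : ξ * c * δ * ((2 + ε / 2) * m) ≤ ξ * c * δ * ((1 - ε / 6) * Y) := by gcongr
  have s7 : K * δ * Y * 4 = ξ * c * δ * (ε / 6 * Y) := by linear_combination (-δ * Y / 6) * hc
  have s8 : ξ * (1 + c * δ * X ^ 2 * m ^ 2) = ξ + ξ * c * δ * Y := by rw [hY]; ring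
  rw [s8, add_mul]
  have s9 : ξ * ((2 + ε / 2) * t) = ξ * c * δ * ((2 + ε / 2) * m) := by rw [htd]; ring
  linarith

/-- The angular condition for `‖M‖² X² ≥ 2 + ε`. Here `m = ‖M‖²`, `N = ‖g‖²`, and `A`, `A'` are the
angles before and after thickening. -/
lemma far_case {ξ ε c K δ m X Q N A A' : ℝ} (hξ : 0 < ξ) (hε0 : 0 < ε) (hε1 : ε ≤ 1)
    (hK : K = 6 * ξ + 35) (hc : c * ξ * ε = 24 * K) (hc0 : 0 < c) (hδ0 : 0 < δ) (hm2 : 2 ≤ m)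
    (hX : 1 < X) (hQ : 0 < Q) (ht : c * δ * m ≤ ε / 2) (hcase : 2 + ε ≤ m * X ^ 2)
    (hNinv : 1 / N < X ^ 2 / Q ^ 2) (hA : A < 2 * ξ / Q ^ 2)
    (hA' : A' ≤ A * (1 + 24 * δ) + 70 * δ * m ^ 2 / N) :
    A' < 2 * (ξ * (1 + c * δ * X ^ 2 * m ^ 2)) / (Q * (1 + c * δ * m)) ^ 2 := by
  have hK0 : 0 < K := by rw [hK]; positivity
  have hm0 : 0 < m := by linarith
  have ht0 : 0 < c * δ * m := by positivity
  have hb := budget hξ hε0 hε1 hK0 hc hδ0 (by linarith) ht hcase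
  have hY : 4 ≤ X ^ 2 * m ^ 2 := by
    have h1 : 1 ≤ X ^ 2 := by nlinarith
    have h2 : 4 ≤ m ^ 2 := by nlinarith
    nlinarith
  rw [lt_div_iff₀ (by positivity)]
  have s1 : A * (1 + 24 * δ) < 2 * ξ / Q ^ 2 * (1 + 24 * δ) := by gcongr
  have s2 : 70 * δ * m ^ 2 / N ≤ 70 * δ * m ^ 2 * (X ^ 2 / Q ^ 2) := by
    rw [div_eq_mul_one_div]; gcongr
  have s3 : A' <
      2 * (ξ + K * δ * (X ^ 2 * m ^ 2)) / Q ^ 2 := by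
    have : 2 * ξ / Q ^ 2 * (1 + 24 * δ) + 70 * δ * m ^ 2 * (X ^ 2 / Q ^ 2) ≤
        2 * (ξ + K * δ * (X ^ 2 * m ^ 2)) / Q ^ 2 := by
      have e : 2 * ξ / Q ^ 2 * (1 + 24 * δ) + 70 * δ * m ^ 2 * (X ^ 2 / Q ^ 2) =
        (2 * ξ * (1 + 24 * δ) + 70 * δ * m ^ 2 * X ^ 2) / Q ^ 2 := by ring
      rw [e, hK]
      gcongr
      nlinarith [mul_le_mul_of_nonneg_left hY (mul_pos hξ hδ0).le]
    linarith
  calc _ < 2 * (ξ + K * δ * (X ^ 2 * m ^ 2)) / Q ^ 2 * (Q * (1 + c * δ * m)) ^ 2 := by gcongr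
    _ = 2 * ((ξ + K * δ * (X ^ 2 * m ^ 2)) * (1 + c * δ * m) ^ 2) := by field_simp
    _ ≤ _ := by linarith

/-- The angular condition for `X²` close to `1` and `M` close to a rotation, where `w = ‖W M‖` is so
small that the angle between `x` and `x M` meets the bound whatever the original angle was.
Here `m = ‖M‖²`, `N = ‖g‖²` and `N' = ‖x‖²`. -/
lemma near_case {ξ η c δ m X Q N N' w : ℝ} (hξ : 0 < ξ) (hη0 : 0 < η) (hη : η ≤ ξ / 16)
    (hc0 : 0 < c) (hδ0 : 0 < δ) (hm0 : 0 < m) (hX0 : 0 < X) (hQ : 0 < Q)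
    (ht : c * δ * m ≤ 1 / 2) (hX2 : X ^ 2 ≤ 3 / 2) (hN : 0 < N)
    (hNinv : 1 / N < X ^ 2 / Q ^ 2) (hNN' : 9 / 10 * N ≤ N') (hw : w ≤ η) :
    4 * w / N' < 2 * (ξ * (1 + c * δ * X ^ 2 * m ^ 2)) / (Q * (1 + c * δ * m)) ^ 2 := by
  have ht0 : 0 < c * δ * m := by positivity
  have b : 4 * w / N' ≤ 7 * η / Q ^ 2 := by
    calc 4 * w / N' ≤ 4 * η / (9 / 10 * N) := by gcongr
      _ = 40 / 9 * η * (1 / N) := by field_simp; norm_num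
      _ ≤ 40 / 9 * η * ((3 / 2) / Q ^ 2) := by
        have : X ^ 2 / Q ^ 2 ≤ 3 / 2 / Q ^ 2 := by gcongr
        exact mul_le_mul_of_nonneg_left (by linarith) (by positivity)
      _ = 20 / 3 * η / Q ^ 2 := by ring
      _ ≤ _ := by gcongr; norm_num
  refine b.trans_lt ?_
  have : 0 < c * δ * X ^ 2 * m ^ 2 := by positivity
  calc 7 * η / Q ^ 2 < ξ / 2 / Q ^ 2 := by gcongr; linarith
    _ = 2 * ξ / (Q ^ 2 * 4) := by field_simp; norm_num
    _ ≤ 2 * (ξ * (1 + c * δ * X ^ 2 * m ^ 2)) / (Q * (1 + c * δ * m)) ^ 2 := by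
      rw [mul_pow]
      gcongr
      · nlinarith
      · nlinarith

set_option maxHeartbeats 1000000 in
/-- Lemma 4.1, well-roundedness: the thickening of the truncated region
is contained in a slightly enlarged region. -/
theorem thickening_subset :
    ∀ ξ : ℝ, 0 < ξ → ∃ c > (0:ℝ), ∃ c' > (0:ℝ),
      ∀ (M : SL2R) (Q X δ : ℝ),
        M • UpperHalfPlane.I ≠ UpperHalfPlane.I →
        1 < X → X < Q / (20 * fnorm M) →
        0 < δ → δ < c' * (fnormSq M)⁻¹ →
        Bdel δ * RMX M Q ξ X * Ddel δ ⊆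
          RMX M (Q * (1 + c * δ * fnormSq M)) (ξ * (1 + c * δ * X ^ 2 * fnormSq M ^ 2))
            (2 * X) := by
  intro ξ hξ
  -- `η` makes `near_case` work; `ε = η² / 5` guarantees `‖W M‖² = ‖M‖⁴ - 4 ≤ η²` when
  -- `‖M‖² < 2 + ε`; `K` collects the errors of `perturb`; `c` is what `budget` demands.
  obtain ⟨η, hη0, hη1, hη2⟩ : ∃ η : ℝ, 0 < η ∧ η ≤ 1 / 4 ∧ η ≤ ξ / 16 :=
    ⟨min (1 / 4) (ξ / 16), by positivity, min_le_left _ _, min_le_right _ _⟩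
  obtain ⟨ε, hε⟩ : ∃ ε : ℝ, ε = η ^ 2 / 5 := ⟨_, rfl⟩
  have hε0 : 0 < ε := by rw [hε]; positivity
  have hε1 : ε ≤ 1 / 80 := by rw [hε]; nlinarith
  obtain ⟨K, hK⟩ : ∃ K : ℝ, K = 6 * ξ + 35 := ⟨_, rfl⟩
  have hK0 : 0 < K := by rw [hK]; positivity
  obtain ⟨c, hcd⟩ : ∃ c : ℝ, c = 24 * K / (ξ * ε) := ⟨_, rfl⟩
  have hc0 : 0 < c := by rw [hcd]; positivity
  have hc : c * ξ * ε = 24 * K := by rw [hcd]; field_simp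
  have hc144 : 144 ≤ c := by
    rw [hcd, le_div_iff₀ (by positivity), hK]
    nlinarith [mul_pos hξ hε0]
  -- The choice of `c'` gives `c δ ‖M‖² ≤ ε / 2`.
  refine ⟨c, hc0, ε / (2 * c), by positivity, ?_⟩
  intro M Q X δ _ hX hXQ hδ0 hδ
  rintro _ ⟨_, ⟨h, hh, g, ⟨-, -, hg1, hg2, hang, hglo⟩, rfl⟩, d, hd, rfl⟩
  change h * g * d ∈ _
  set m := fnormSq M with hm
  have hm2 : 2 ≤ m := two_le_fnormSq M
  have hδm : δ * m < ε / (2 * c) := by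
    rwa [← div_eq_mul_inv, lt_div_iff₀ (by linarith)] at hδ
  have ht : c * δ * m ≤ ε / 2 := by
    rw [lt_div_iff₀ (by positivity)] at hδm; linarith
  have hδm2 : δ * m ≤ 1 / 200 := by nlinarith [mul_pos hδ0 (by linarith : 0 < m)]
  have hX0 : 0 < X := by linarith
  have hfM : 0 < fnorm M := Real.sqrt_pos.2 (by linarith)
  have hfM2 : fnorm M ^ 2 = m := Real.sq_sqrt (by linarith)
  have hXQ' : X * (20 * fnorm M) < Q := by rwa [lt_div_iff₀ (by positivity)] at hXQ
  have hQ : 0 < Q := lt_trans (by positivity) hXQ'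
  have hN : (Q / X) ^ 2 < fnormSq g := (Real.lt_sqrt (by positivity)).1 hglo
  have hNQ : fnormSq g < Q ^ 2 := (Real.sqrt_lt' hQ).1 hg1
  have hNQ' : fnormSq (g * M) < Q ^ 2 := (Real.sqrt_lt' hQ).1 hg2
  have hQX : 400 * m < (Q / X) ^ 2 := by
    have : 20 * fnorm M < Q / X := by rw [lt_div_iff₀ hX0]; linarith
    calc 400 * m = (20 * fnorm M) ^ 2 := by rw [mul_pow, hfM2]; norm_num
      _ < _ := by gcongr
  have hNm : 400 * m ≤ fnormSq g := (hQX.trans hN).le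
  obtain ⟨p1, p2, p3, p4⟩ := perturb M g h d δ hδ0 hδm2 hNm hh hd
  rw [← hm] at p1 p2 p4
  have hNpos : 0 < fnormSq g := by linarith
  have hgM : 400 ≤ fnormSq (g * M) := by
    refine le_trans ?_ (div_le_fnormSq_mul g M)
    rw [le_div_iff₀ (by linarith)]; exact hNm
  have hxM : 2 < fnormSq (h * g * d * M) := by
    have := div_le_fnormSq_mul (h * g * d) M
    refine lt_of_lt_of_le ?_ this
    rw [lt_div_iff₀ (by linarith)]; linarith
  have hx : 2 < fnormSq (h * g * d) := by linarith
  have hup : ∀ y : SL2R, ∀ r < Q ^ 2, fnormSq y ≤ r * (1 + 12 * (δ * m)) ^ 2 →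
      fnorm y < Q * (1 + c * δ * m) := by
    intro y r hr hy
    have hdm : 0 < δ * m := by positivity
    refine (Real.sqrt_lt' (by positivity)).2 (hy.trans_lt ?_)
    calc r * (1 + 12 * (δ * m)) ^ 2 < Q ^ 2 * (1 + 12 * (δ * m)) ^ 2 := by gcongr
      _ ≤ Q ^ 2 * (1 + c * δ * m) ^ 2 := by gcongr ?_ * (1 + ?_) ^ 2; nlinarith
      _ = _ := by ring
  have ht0 : 0 < c * δ * m := by positivity
  refine ⟨fnormSq_ne _ hx, fnormSq_ne _ hxM, hup _ _ hNQ p1, hup _ _ hNQ' p2, ?_, ?_⟩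
  · rw [angDist_theta _ _ hx hxM]
    rw [angDist_theta _ _ (by linarith) (by linarith)] at hang
    have hNinv : 1 / fnormSq g < X ^ 2 / Q ^ 2 := by
      rw [div_lt_div_iff₀ hNpos (by positivity)]
      rw [div_pow, div_lt_iff₀ (by positivity)] at hN
      linarith
    rcases le_or_gt (2 + ε) (m * X ^ 2) with hcase | hcase
    · exact far_case hξ hε0 (by linarith) hK hc hc0 hδ0 hm2 hX hQ ht hcase hNinv hang p4
    · -- Both `‖M‖² ≥ 2` and `X² > 1` are then nearly equalities.
      have hX1 : 1 ≤ X ^ 2 := one_le_pow₀ hX.le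
      have hm3 : m < 2 + ε := by
        linarith [mul_le_mul_of_nonneg_left hX1 (by linarith : 0 ≤ m)]
      have hX2 : X ^ 2 ≤ 3 / 2 := by
        linarith [mul_le_mul_of_nonneg_right hm2 (sq_nonneg X)]
      have hWM : ‖W M‖ ≤ η := by
        refine (sq_le_sq₀ (norm_nonneg _) hη0.le).1 ?_
        rw [norm_W_sq, ← hm]
        have h4 : (m - 2) * (m + 2) ≤ ε * 5 :=
          mul_le_mul (by linarith) (by linarith) (by linarith) hε0.le
        linarith
      have a := angle_W_mul_right (h * g * d) M (by linarith) (by linarith)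
      rw [angle_comm] at a
      exact a.trans_lt (near_case hξ hη0 hη2 hc0 hδ0 (by linarith) hX0 hQ (by linarith) hX2 hNpos
        hNinv p3 hWM)
  · refine (Real.lt_sqrt (by positivity)).2 ?_
    have e : (Q * (1 + c * δ * m) / (2 * X)) ^ 2 = (Q / X) ^ 2 * ((1 + c * δ * m) ^ 2 / 4) := by
      field_simp; norm_num
    rw [e]
    have : (1 + c * δ * m) ^ 2 / 4 ≤ 9 / 10 := by nlinarith
    have : (Q / X) ^ 2 * ((1 + c * δ * m) ^ 2 / 4) ≤ (Q / X) ^ 2 * (9 / 10) := by gcongr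
    linarith
end
end

section
/- Fix ℓ > 0 and set A = cosh ℓ, B = sinh ℓ. For ξ > 0 and y ∈ (−1,1), define j_ξ(y) := max(0, min(1, 1/(A + By)) − B·√(1−y²)/(ξ·(A + By))), and set F(ξ) := ∫_{−1}^{1} j_ξ(y)·(1−y²)^{−1/2} dy. Then F(ξ) → 0 as ξ → 0⁺, and for every ξ > 0 the function F is differentiable at ξ with F′(ξ) = f_ξ(ℓ). -/
/-!
Put `A = cosh l`, `B = sinh l`, `D = A + B y`. Away from the finitely many `y` where the positive
part in `jxi` has its kink, the `ξ`-derivative of `j_ξ(y) / √(1 - y²)` is `B / (ξ² D)` if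
`j_ξ(y) > 0` and `0` otherwise (`dens`). The integrand is locally Lipschitz in `ξ` with an integrable
constant, so differentiation under the integral sign is allowed (`hasDerivAt_Ffun_dens`).

It remains to integrate `dens`. As `A² - B² = 1`, the condition `j_ξ(y) > 0` says that the two
quadratics `(1 + ξ²) D² - 2 A D + 1` and `D² - 2 A D + 1 + ξ²` are both positive. They are positive
everywhere when `ξ > B`; otherwise, with `s = √(B² - ξ²)` and `(A + s)(A - s) = 1 + ξ²`, they exclude
the ranges `[1/(A+s), 1/(A-s)]` and `[A-s, A+s]` of `D`. These overlap exactly when `A - s ≤ 1`,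
that is, when `ξ ≤ 2 sinh (l/2)`. Since `D` runs over `[e^{-l}, e^l]` and `log D` is a primitive of
`B / D`, the three cases give the three branches of `fxi`. The limit at `0⁺` is dominated
convergence (`tendsto_Ffun`).
-/

open Matrix MeasureTheory Real Filter Topology
open scoped MatrixGroups Pointwise

noncomputable section

/-- The integrand length `j_ξ(y)` (with parameters `A = cosh ℓ`, `B = sinh ℓ`). -/
def jxi (l ξ y : ℝ) : ℝ :=
  max 0 (min 1 (1 / (Real.cosh l + Real.sinh l * y))
    - Real.sinh l * Real.sqrt (1 - y ^ 2) / (ξ * (Real.cosh l + Real.sinh l * y)))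

/-- `F(ξ) = ∫_{−1}^{1} j_ξ(y) (1−y²)^{−1/2} dy`. -/
def Ffun (l ξ : ℝ) : ℝ := ∫ y in (-1:ℝ)..1, jxi l ξ y / Real.sqrt (1 - y ^ 2)

section

open Set
open scoped Interval

/-! ### The integrand and its derivative in `ξ` -/

/-- The denominator `A + B y`. -/
def Dl (l y : ℝ) : ℝ := Real.cosh l + Real.sinh l * y

/-- The expression inside the positive part of `jxi`. -/
def gain (l x y : ℝ) : ℝ :=
  min 1 (1 / Dl l y) - Real.sinh l * Real.sqrt (1 - y ^ 2) / (x * Dl l y)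

open Classical in
/-- The `ξ`-derivative of `j_ξ(y) / √(1 - y²)` away from the kink of the positive part. -/
def dens (l x y : ℝ) : ℝ :=
  if Real.sinh l * Real.sqrt (1 - y ^ 2) < x * Dl l y ∧ Real.sinh l * Real.sqrt (1 - y ^ 2) < x
  then Real.sinh l / (x ^ 2 * Dl l y) else 0

/-- The point `y` at which `A + B y = p`. -/
def yOf (l p : ℝ) : ℝ := (p - Real.cosh l) / Real.sinh l

lemma jxi_eq_max_gain (l x y : ℝ) : jxi l x y = max 0 (gain l x y) := rfl

lemma Dl_pos (l : ℝ) (hl : 0 < l) (y : ℝ) (hy : -1 ≤ y) : 0 < Dl l y := by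
  have h1 : 0 < Real.sinh l := Real.sinh_pos_iff.2 hl
  have h2 := Real.sinh_lt_cosh l
  unfold Dl
  nlinarith

lemma sqrt_pos_of_mem {y : ℝ} (hy : y ∈ Ioo (-1 : ℝ) 1) : 0 < Real.sqrt (1 - y ^ 2) :=
  Real.sqrt_pos.2 (by nlinarith [hy.1, hy.2])

lemma gain_pos_iff {l x y : ℝ} (hD : 0 < Dl l y) (hx : 0 < x) :
    0 < gain l x y ↔ Real.sinh l * Real.sqrt (1 - y ^ 2) < x * Dl l y ∧
      Real.sinh l * Real.sqrt (1 - y ^ 2) < x := by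
  unfold gain
  rw [sub_pos, lt_min_iff, div_lt_one (by positivity), div_lt_div_iff₀ (by positivity) hD, one_mul,
    mul_lt_mul_iff_left₀ hD]

lemma gain_eq_zero {l x y : ℝ} (hD : 0 < Dl l y) (hx : 0 < x) (h : gain l x y = 0) :
    Real.sinh l * Real.sqrt (1 - y ^ 2) = x * Dl l y ∨
      Real.sinh l * Real.sqrt (1 - y ^ 2) = x := by
  unfold gain at h
  rcases min_choice 1 (1 / Dl l y) with h1 | h1 <;> rw [h1] at h
  · left
    rw [sub_eq_zero, eq_comm, div_eq_one_iff_eq (by positivity)] at h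
    exact h
  · right
    rw [sub_eq_zero] at h
    field_simp at h
    linarith

/-! ### Integrability and the limit at zero -/

/-- The integrand is the nonnegative derivative of `arcsin`, which is continuous on `[-1, 1]`. -/
lemma integrable_inv_sqrt :
    IntervalIntegrable (fun y : ℝ => 1 / Real.sqrt (1 - y ^ 2)) volume (-1) 1 := by
  apply intervalIntegral.intervalIntegrable_deriv_of_nonneg (g := Real.arcsin)
  · exact Real.continuous_arcsin.continuousOn
  · intro x hx
    norm_num at hx
    exact Real.hasDerivAt_arcsin hx.1.ne' hx.2.ne
  · intro x _
    positivity

lemma measurable_Dl (l : ℝ) : Measurable (Dl l) := by unfold Dl; fun_prop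

lemma measurable_integrand (l x : ℝ) :
    Measurable (fun y => jxi l x y / Real.sqrt (1 - y ^ 2)) := by
  unfold jxi; fun_prop

lemma measurable_dens (l x : ℝ) : Measurable (dens l x) := by
  have hD := measurable_Dl l
  unfold dens
  refine Measurable.ite ?_ (by fun_prop) measurable_const
  have hr : Measurable fun y : ℝ => Real.sinh l * Real.sqrt (1 - y ^ 2) := by fun_prop
  exact (measurableSet_lt hr (hD.const_mul x)).inter (measurableSet_lt hr measurable_const)

lemma jxi_mem_Icc {l x y : ℝ} (hl : 0 < l) (hx : 0 < x) (hy : -1 ≤ y) :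
    jxi l x y ∈ Icc (0 : ℝ) 1 := by
  refine ⟨le_max_left _ _, max_le zero_le_one ?_⟩
  have hD := Dl_pos l hl y hy
  have hB : 0 < Real.sinh l := Real.sinh_pos_iff.2 hl
  have : 0 ≤ Real.sinh l * Real.sqrt (1 - y ^ 2) / (x * Dl l y) := by positivity
  have h2 := min_le_left 1 (1 / Dl l y)
  unfold Dl at *
  linarith

lemma norm_integrand_le {l x y : ℝ} (hl : 0 < l) (hx : 0 < x) (hy : -1 ≤ y) :
    ‖jxi l x y / Real.sqrt (1 - y ^ 2)‖ ≤ 1 / Real.sqrt (1 - y ^ 2) := by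
  have h := jxi_mem_Icc hl hx hy
  rw [Real.norm_of_nonneg (div_nonneg h.1 (Real.sqrt_nonneg _))]
  gcongr
  exact h.2

lemma integrable_integrand {l x : ℝ} (hl : 0 < l) (hx : 0 < x) :
    IntervalIntegrable (fun y => jxi l x y / Real.sqrt (1 - y ^ 2)) volume (-1) 1 := by
  refine integrable_inv_sqrt.mono_fun (measurable_integrand l x).aestronglyMeasurable ?_
  rw [Filter.EventuallyLE, ae_restrict_iff' measurableSet_uIoc]
  refine Eventually.of_forall fun y hy => ?_
  rw [uIoc_of_le (by norm_num)] at hy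
  exact (norm_integrand_le hl hx hy.1.le).trans (le_abs_self _)

/-- For fixed `y ∈ (-1, 1)` the integrand vanishes identically for small `ξ`, so dominated
convergence applies with the arcsine density as the bound. -/
lemma tendsto_Ffun (l : ℝ) (hl : 0 < l) :
    Tendsto (fun ξ => Ffun l ξ) (𝓝[>] (0:ℝ)) (𝓝 0) := by
  have hB : 0 < Real.sinh l := Real.sinh_pos_iff.2 hl
  have key : Tendsto (fun ξ => Ffun l ξ) (𝓝[>] (0:ℝ)) (𝓝 (∫ _ in (-1:ℝ)..1, (0:ℝ))) := by
    refine intervalIntegral.tendsto_integral_filter_of_dominated_convergence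
      (fun y => 1 / Real.sqrt (1 - y ^ 2)) ?_ ?_ integrable_inv_sqrt ?_
    · exact Eventually.of_forall fun x => (measurable_integrand l x).aestronglyMeasurable
    · filter_upwards [self_mem_nhdsWithin] with x hx
      refine Eventually.of_forall fun y hy => ?_
      rw [uIoc_of_le (by norm_num)] at hy
      exact norm_integrand_le hl hx hy.1.le
    · filter_upwards [Measure.ae_ne volume (1:ℝ)] with y hy1 hy
      rw [uIoc_of_le (by norm_num)] at hy
      have hy' : y ∈ Ioo (-1:ℝ) 1 := ⟨hy.1, lt_of_le_of_ne hy.2 hy1⟩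
      have hr := sqrt_pos_of_mem hy'
      refine tendsto_const_nhds.congr' ?_
      filter_upwards [self_mem_nhdsWithin,
        nhdsWithin_le_nhds (Iio_mem_nhds (mul_pos hB hr))] with x hx hx2
      have : ¬ 0 < gain l x y := by
        rw [gain_pos_iff (Dl_pos l hl y hy.1.le) hx]
        exact fun h => lt_asymm h.2 hx2
      rw [jxi_eq_max_gain, max_eq_left (not_lt.1 this), zero_div]
  simpa using key

/-! ### Sign conditions as quadratic inequalities -/

/-- The inequality `ξ (A + B y) > B √(1 - y²)`, squared and rewritten with `A² - B² = 1` as a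
quadratic inequality in `A + B y`. -/
lemma quad_one {l x y : ℝ} (hl : 0 < l) (hx : 0 < x) (hy : y ∈ Ioo (-1 : ℝ) 1) :
    Real.sinh l * Real.sqrt (1 - y ^ 2) < x * Dl l y ↔
      0 < (1 + x ^ 2) * Dl l y ^ 2 - 2 * Real.cosh l * Dl l y + 1 := by
  have hB : 0 < Real.sinh l := Real.sinh_pos_iff.2 hl
  have hD := Dl_pos l hl y hy.1.le
  rw [← sq_lt_sq₀ (by positivity) (by positivity), mul_pow, Real.sq_sqrt (by nlinarith [hy.1, hy.2]),
    ← sub_pos]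
  have : (x * Dl l y) ^ 2 - Real.sinh l ^ 2 * (1 - y ^ 2) =
      (1 + x ^ 2) * Dl l y ^ 2 - 2 * Real.cosh l * Dl l y + 1 := by
    unfold Dl
    linear_combination Real.cosh_sq l
  rw [this]

lemma quad_two {l x y : ℝ} (hl : 0 < l) (hx : 0 < x) (hy : y ∈ Ioo (-1 : ℝ) 1) :
    Real.sinh l * Real.sqrt (1 - y ^ 2) < x ↔
      0 < Dl l y ^ 2 - 2 * Real.cosh l * Dl l y + 1 + x ^ 2 := by
  have hB : 0 < Real.sinh l := Real.sinh_pos_iff.2 hl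
  rw [← sq_lt_sq₀ (by positivity) (by positivity), mul_pow, Real.sq_sqrt (by nlinarith [hy.1, hy.2]),
    ← sub_pos]
  have : x ^ 2 - Real.sinh l ^ 2 * (1 - y ^ 2) =
      Dl l y ^ 2 - 2 * Real.cosh l * Dl l y + 1 + x ^ 2 := by
    unfold Dl
    linear_combination Real.cosh_sq l
  rw [this]

/-- A zero of `gain` solves one of two quadratic equations in `A + B y`, so there are at most four
of them. -/
lemma ae_gain_ne_zero {l x : ℝ} (hl : 0 < l) (hx : 0 < x) :
    ∀ᵐ y : ℝ, y ∈ Ioo (-1 : ℝ) 1 → gain l x y ≠ 0 := by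
  have hB : 0 < Real.sinh l := Real.sinh_pos_iff.2 hl
  set s := Real.sqrt (Real.sinh l ^ 2 - x ^ 2) with hs
  have hfin : Set.Finite ({yOf l (Real.cosh l + s), yOf l (Real.cosh l - s),
      yOf l ((Real.cosh l + s) / (1 + x ^ 2)), yOf l ((Real.cosh l - s) / (1 + x ^ 2))} : Set ℝ) :=
    Set.toFinite _
  filter_upwards [measure_eq_zero_iff_ae_notMem.1 (hfin.measure_zero volume)] with y hy hmem h0
  apply hy
  have hD := Dl_pos l hl y hmem.1.le
  have hyD : ∀ p, Dl l y = p → y = yOf l p := by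
    rintro p rfl
    unfold Dl yOf
    field_simp
    ring
  have hsq : Real.sqrt (1 - y ^ 2) ^ 2 = 1 - y ^ 2 :=
    Real.sq_sqrt (by nlinarith [hmem.1, hmem.2])
  have hroot : ∀ w : ℝ, w ^ 2 = Real.sinh l ^ 2 - x ^ 2 → w = s ∨ w = -s := by
    intro w hw
    rw [hs, ← hw, Real.sqrt_sq_eq_abs]
    rcases abs_choice w with h | h <;> rw [h] <;> simp
  have hc := Real.cosh_sq l
  simp only [Set.mem_insert_iff, Set.mem_singleton_iff]
  rcases gain_eq_zero hD hx h0 with h | h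
  · have h2 : (Real.sinh l * Real.sqrt (1 - y ^ 2)) ^ 2 = (x * Dl l y) ^ 2 := by rw [h]
    rw [mul_pow, hsq] at h2
    have h3 : (1 + x ^ 2) * Dl l y ^ 2 - 2 * Real.cosh l * Dl l y + 1 = 0 := by
      have : (x * Dl l y) ^ 2 - Real.sinh l ^ 2 * (1 - y ^ 2) =
          (1 + x ^ 2) * Dl l y ^ 2 - 2 * Real.cosh l * Dl l y + 1 := by
        unfold Dl
        linear_combination hc
      linarith
    have hne : (1 + x ^ 2) ≠ 0 := by positivity
    rcases hroot ((1 + x ^ 2) * Dl l y - Real.cosh l)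
      (by linear_combination (1 + x ^ 2) * h3 + hc) with h4 | h4
    · right; right; left
      apply hyD
      rw [eq_div_iff hne]; linarith
    · right; right; right
      apply hyD
      rw [eq_div_iff hne]; linarith
  · have h2 : (Real.sinh l * Real.sqrt (1 - y ^ 2)) ^ 2 = x ^ 2 := by rw [h]
    rw [mul_pow, hsq] at h2
    rcases hroot (Dl l y - Real.cosh l) (by unfold Dl; linear_combination -h2) with h4 | h4
    · left
      apply hyD; linarith
    · right; left
      apply hyD; linarith

/-! ### Differentiation under the integral sign -/

lemma hasDerivAt_gain {l x y : ℝ} (hD : 0 < Dl l y) (hx : 0 < x) :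
    HasDerivAt (fun z => gain l z y)
      (Real.sinh l * Real.sqrt (1 - y ^ 2) / (x ^ 2 * Dl l y)) x := by
  have h := ((hasDerivAt_inv hx.ne').const_mul
    (Real.sinh l * Real.sqrt (1 - y ^ 2) / Dl l y)).const_sub (min 1 (1 / Dl l y))
  refine (h.congr_of_eventuallyEq (Eventually.of_forall fun z => ?_)).congr_deriv ?_
  · simp only [gain]
    congr 1
    rw [mul_comm z, ← div_div, div_eq_mul_inv _ z]
  · field_simp

lemma hasDerivAt_integrand {l x y : ℝ} (hl : 0 < l) (hx : 0 < x) (hy : y ∈ Ioo (-1 : ℝ) 1)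
    (h0 : gain l x y ≠ 0) :
    HasDerivAt (fun z => jxi l z y / Real.sqrt (1 - y ^ 2)) (dens l x y) x := by
  have hD := Dl_pos l hl y hy.1.le
  have hr := sqrt_pos_of_mem hy
  have hg := hasDerivAt_gain hD hx
  simp only [jxi_eq_max_gain]
  rcases lt_or_gt_of_ne h0 with h | h
  · have hn : ¬ 0 < gain l x y := h.not_gt
    rw [gain_pos_iff hD hx] at hn
    rw [dens, if_neg hn]
    refine (hasDerivAt_const x (0:ℝ)).congr_of_eventuallyEq ?_
    filter_upwards [hg.continuousAt.eventually (Iio_mem_nhds h)] with z hz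
    rw [max_eq_left (le_of_lt hz), zero_div]
  · have hn := (gain_pos_iff hD hx).1 h
    rw [dens, if_pos hn]
    refine ((hg.div_const (Real.sqrt (1 - y ^ 2))).congr_of_eventuallyEq ?_).congr_deriv ?_
    · filter_upwards [hg.continuousAt.eventually (Ioi_mem_nhds h)] with z hz
      rw [max_eq_right (le_of_lt hz)]
    · field_simp

/-- On `(ξ/2, ∞)` the map `z ↦ 1/z` has Lipschitz constant `4/ξ²`, and taking the positive part
does not increase it. -/
lemma lipschitz_integrand {l x y : ℝ} (hl : 0 < l) (hx : 0 < x) (hy : y ∈ Ioo (-1 : ℝ) 1) :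
    LipschitzOnWith (Real.nnabs (4 / x ^ 2 * (Real.sinh l / Dl l y)))
      (fun z => jxi l z y / Real.sqrt (1 - y ^ 2)) (Ioi (x / 2)) := by
  have hB : 0 < Real.sinh l := Real.sinh_pos_iff.2 hl
  have hD := Dl_pos l hl y hy.1.le
  have hr := sqrt_pos_of_mem hy
  refine LipschitzOnWith.of_dist_le_mul fun a ha b hb => ?_
  rw [mem_Ioi] at ha hb
  have ha0 : 0 < a := by linarith
  have hb0 : 0 < b := by linarith
  rw [Real.coe_nnabs, abs_of_pos (by positivity), Real.dist_eq, Real.dist_eq, ← sub_div, abs_div,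
    abs_of_pos hr, div_le_iff₀ hr, jxi_eq_max_gain, jxi_eq_max_gain]
  refine (abs_max_sub_max_le_max _ _ _ _).trans ?_
  rw [sub_self, abs_zero, max_eq_right (abs_nonneg _)]
  have h1 : gain l a y - gain l b y =
      Real.sinh l * Real.sqrt (1 - y ^ 2) / Dl l y * ((a - b) * (1 / (a * b))) := by
    unfold gain; field_simp; ring
  have hab : 1 / (a * b) ≤ 4 / x ^ 2 := by
    rw [div_le_div_iff₀ (by positivity) (by positivity)]
    nlinarith
  rw [h1, abs_mul, abs_mul, abs_of_pos (by positivity :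
    0 < Real.sinh l * Real.sqrt (1 - y ^ 2) / Dl l y), abs_of_pos (by positivity : 0 < 1 / (a * b))]
  calc Real.sinh l * Real.sqrt (1 - y ^ 2) / Dl l y * (|a - b| * (1 / (a * b)))
      ≤ Real.sinh l * Real.sqrt (1 - y ^ 2) / Dl l y * (|a - b| * (4 / x ^ 2)) := by gcongr
    _ = _ := by ring

lemma continuousOn_inv_Dl {l : ℝ} (hl : 0 < l) :
    ContinuousOn (fun y => Real.sinh l / Dl l y) (Icc (-1) 1) := by
  refine continuousOn_const.div (by unfold Dl; fun_prop) fun y hy => (Dl_pos l hl y hy.1).ne'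

lemma hasDerivAt_Ffun_dens {l x : ℝ} (hl : 0 < l) (hx : 0 < x) :
    IntervalIntegrable (dens l x) volume (-1) 1 ∧
      HasDerivAt (fun z => Ffun l z) (∫ y in (-1:ℝ)..1, dens l x y) x := by
  have hmem : ∀ y, y ≠ 1 → y ∈ Ι (-1:ℝ) 1 → y ∈ Ioo (-1:ℝ) 1 := by
    intro y h1 hy
    rw [uIoc_of_le (by norm_num)] at hy
    exact ⟨hy.1, lt_of_le_of_ne hy.2 h1⟩
  -- the endpoint `y = 1` belongs to `Ι (-1) 1` and is discarded as a null set
  refine intervalIntegral.hasDerivAt_integral_of_dominated_loc_of_lip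
    (F := fun z y => jxi l z y / Real.sqrt (1 - y ^ 2))
    (bound := fun y => 4 / x ^ 2 * (Real.sinh l / Dl l y))
    (Ioi_mem_nhds (by linarith : x / 2 < x)) ?_ (integrable_integrand hl hx)
    (measurable_dens l x).aestronglyMeasurable ?_ ?_ ?_
  · exact Eventually.of_forall fun x => (measurable_integrand l x).aestronglyMeasurable
  · filter_upwards [Measure.ae_ne volume (1:ℝ)] with y hy1 hy
    exact lipschitz_integrand hl hx (hmem y hy1 hy)
  · apply ContinuousOn.intervalIntegrable
    rw [uIcc_of_le (by norm_num)]
    exact continuousOn_const.mul (continuousOn_inv_Dl hl)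
  · filter_upwards [Measure.ae_ne volume (1:ℝ), ae_gain_ne_zero hl hx] with y hy1 h0 hy
    exact hasDerivAt_integrand hl hx (hmem y hy1 hy) (h0 (hmem y hy1 hy))

/-! ### Integration of `dens` in the variable `A + B y` -/

lemma Dl_yOf {l : ℝ} (hl : 0 < l) (p : ℝ) : Dl l (yOf l p) = p := by
  have hB : 0 < Real.sinh l := Real.sinh_pos_iff.2 hl
  unfold Dl yOf
  field_simp
  ring

lemma yOf_le {l p q : ℝ} (hl : 0 < l) (h : p ≤ q) : yOf l p ≤ yOf l q := by
  have hB : 0 < Real.sinh l := Real.sinh_pos_iff.2 hl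
  unfold yOf
  gcongr

lemma yOf_left {l : ℝ} (hl : 0 < l) : yOf l (Real.cosh l - Real.sinh l) = -1 := by
  have hB : 0 < Real.sinh l := Real.sinh_pos_iff.2 hl
  unfold yOf
  field_simp
  ring

lemma yOf_right {l : ℝ} (hl : 0 < l) : yOf l (Real.cosh l + Real.sinh l) = 1 := by
  have hB : 0 < Real.sinh l := Real.sinh_pos_iff.2 hl
  unfold yOf
  field_simp
  ring

lemma Dl_mem {l p q y : ℝ} (hl : 0 < l) (hy : y ∈ Ioo (yOf l p) (yOf l q)) :
    p < Dl l y ∧ Dl l y < q := by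
  have hB : 0 < Real.sinh l := Real.sinh_pos_iff.2 hl
  obtain ⟨h1, h2⟩ := hy
  unfold yOf at h1 h2
  rw [div_lt_iff₀ hB] at h1
  rw [lt_div_iff₀ hB] at h2
  unfold Dl
  constructor <;> linarith

/-- On a range `p < A + B y < q` where both quadratics are positive, `dens` is `B / (ξ² (A + B y))`,
with primitive `ξ⁻² log (A + B y)`. -/
lemma integral_dens_on {l x p q : ℝ} (hl : 0 < l) (hx : 0 < x)
    (hp : Real.cosh l - Real.sinh l ≤ p) (hpq : p ≤ q) (hq : q ≤ Real.cosh l + Real.sinh l)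
    (h : ∀ D, p < D → D < q → 0 < (1 + x ^ 2) * D ^ 2 - 2 * Real.cosh l * D + 1 ∧
      0 < D ^ 2 - 2 * Real.cosh l * D + 1 + x ^ 2) :
    ∫ y in (yOf l p)..(yOf l q), dens l x y = 1 / x ^ 2 * (Real.log q - Real.log p) := by
  have hle := yOf_le hl hpq
  have h1 := yOf_left hl ▸ yOf_le hl hp
  have h2 := yOf_right hl ▸ yOf_le hl hq
  have hsub : uIcc (yOf l p) (yOf l q) ⊆ Icc (-1) 1 := by
    rw [uIcc_of_le hle]
    exact Icc_subset_Icc h1 h2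
  have e1 : ∫ y in (yOf l p)..(yOf l q), dens l x y =
      ∫ y in (yOf l p)..(yOf l q), 1 / x ^ 2 * (Real.sinh l / Dl l y) := by
    refine intervalIntegral.integral_congr_Ioo_of_le hle fun y hy => ?_
    have hy' : y ∈ Ioo (-1:ℝ) 1 := ⟨h1.trans_lt hy.1, hy.2.trans_le h2⟩
    have hD := Dl_mem hl hy
    have := h _ hD.1 hD.2
    rw [dens, if_pos ⟨(quad_one hl hx hy').2 this.1, (quad_two hl hx hy').2 this.2⟩]
    rw [div_mul_div_comm, one_mul]
  rw [e1, intervalIntegral.integral_const_mul,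
    intervalIntegral.integral_eq_sub_of_hasDerivAt (f := fun y => Real.log (Dl l y)),
    Dl_yOf hl, Dl_yOf hl]
  · intro y hy
    have hD := Dl_pos l hl y (hsub hy).1
    have h3 : HasDerivAt (Dl l) (Real.sinh l) y := by
      have := ((hasDerivAt_id y).const_mul (Real.sinh l)).const_add (Real.cosh l)
      rwa [mul_one] at this
    exact h3.log hD.ne'
  · exact ((continuousOn_inv_Dl hl).mono hsub).intervalIntegrable

/-- On a range of `A + B y` where one of the quadratics is nonpositive, `dens` vanishes. -/
lemma integral_dens_off {l x p q : ℝ} (hl : 0 < l) (hx : 0 < x)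
    (hp : Real.cosh l - Real.sinh l ≤ p) (hpq : p ≤ q) (hq : q ≤ Real.cosh l + Real.sinh l)
    (h : ∀ D, p < D → D < q → (1 + x ^ 2) * D ^ 2 - 2 * Real.cosh l * D + 1 ≤ 0 ∨
      D ^ 2 - 2 * Real.cosh l * D + 1 + x ^ 2 ≤ 0) :
    ∫ y in (yOf l p)..(yOf l q), dens l x y = 0 := by
  have hle := yOf_le hl hpq
  have h1 := yOf_left hl ▸ yOf_le hl hp
  have h2 := yOf_right hl ▸ yOf_le hl hq
  have e1 : ∫ y in (yOf l p)..(yOf l q), dens l x y = ∫ y in (yOf l p)..(yOf l q), (0:ℝ) := by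
    refine intervalIntegral.integral_congr_Ioo_of_le hle fun y hy => ?_
    have hy' : y ∈ Ioo (-1:ℝ) 1 := ⟨h1.trans_lt hy.1, hy.2.trans_le h2⟩
    have hD := Dl_mem hl hy
    have := h _ hD.1 hD.2
    rw [dens, if_neg]
    rintro ⟨ha, hb⟩
    rw [quad_one hl hx hy'] at ha
    rw [quad_two hl hx hy'] at hb
    rcases this with h | h <;> linarith
  rw [e1, intervalIntegral.integral_zero]

lemma integrable_dens_sub {l x p q : ℝ} (hl : 0 < l) (hx : 0 < x)
    (hp : Real.cosh l - Real.sinh l ≤ p) (hpq : p ≤ q) (hq : q ≤ Real.cosh l + Real.sinh l) :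
    IntervalIntegrable (dens l x) volume (yOf l p) (yOf l q) := by
  refine (hasDerivAt_Ffun_dens hl hx).1.mono_set ?_
  rw [uIcc_of_le (yOf_le hl hpq), uIcc_of_le (by norm_num)]
  exact Icc_subset_Icc (yOf_left hl ▸ yOf_le hl hp) (yOf_right hl ▸ yOf_le hl hq)

lemma integral_dens_add {l x p q : ℝ} (hl : 0 < l) (hx : 0 < x)
    (hp : Real.cosh l - Real.sinh l ≤ p) (hpq : p ≤ q) (hq : q ≤ Real.cosh l + Real.sinh l) :
    ∫ y in (-1:ℝ)..(yOf l q), dens l x y =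
      (∫ y in (-1:ℝ)..(yOf l p), dens l x y) + ∫ y in (yOf l p)..(yOf l q), dens l x y := by
  rw [← yOf_left hl]
  exact (intervalIntegral.integral_add_adjacent_intervals
    (integrable_dens_sub hl hx le_rfl hp (hpq.trans hq))
    (integrable_dens_sub hl hx hp hpq hq)).symm

lemma log_right (l : ℝ) : Real.log (Real.cosh l + Real.sinh l) = l := by
  rw [Real.cosh_add_sinh, Real.log_exp]

lemma log_left (l : ℝ) : Real.log (Real.cosh l - Real.sinh l) = -l := by
  rw [Real.cosh_sub_sinh, Real.log_exp]

/-! ### The three ranges of `ξ` -/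

lemma four_sinh_half_sq (l : ℝ) : (2 * Real.sinh (l / 2)) ^ 2 = 2 * Real.cosh l - 2 := by
  have h1 := Real.cosh_two_mul (l / 2)
  have h2 := Real.cosh_sq (l / 2)
  rw [mul_div_cancel₀ l two_ne_zero] at h1
  linarith

/-- For `ξ > B` both quadratics are positive everywhere. -/
lemma integral_dens_large {l x : ℝ} (hl : 0 < l) (hx : Real.sinh l < x) :
    ∫ y in (-1:ℝ)..1, dens l x y = 2 / x ^ 2 * l := by
  have hB : 0 < Real.sinh l := Real.sinh_pos_iff.2 hl
  have hc := Real.cosh_sq l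
  have hlt : Real.sinh l ^ 2 < x ^ 2 := by gcongr
  have h := integral_dens_on hl (hB.trans hx) le_rfl (by linarith) le_rfl (by
    intro D _ _
    constructor
    · have h1 : 0 < 1 + x ^ 2 := by positivity
      refine pos_of_mul_pos_right (a := 1 + x ^ 2) ?_ h1.le
      nlinarith [sq_nonneg ((1 + x ^ 2) * D - Real.cosh l)]
    · nlinarith [sq_nonneg (D - Real.cosh l)])
  rw [yOf_left hl, yOf_right hl, log_left, log_right] at h
  rw [h]; ring

/-- The product identity `(A + s) (A - s) = 1 + ξ²` for `s = √(B² - ξ²)` lets the two quadratics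
factor as `((A + s) D - 1) ((A - s) D - 1)` and `(D - (A - s)) (D - (A + s))`. -/
lemma s_facts {l x : ℝ} (hl : 0 < l) (hx : 0 < x) (hxB : x ≤ Real.sinh l) :
    ∃ s, s = Real.sqrt (Real.sinh l ^ 2 - x ^ 2) ∧ 0 ≤ s ∧ s < Real.sinh l ∧
      (Real.cosh l + s) * (Real.cosh l - s) = 1 + x ^ 2 := by
  have hB : 0 < Real.sinh l := Real.sinh_pos_iff.2 hl
  have hc := Real.cosh_sq l
  have hs : Real.sqrt (Real.sinh l ^ 2 - x ^ 2) ^ 2 = Real.sinh l ^ 2 - x ^ 2 :=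
    Real.sq_sqrt (by nlinarith)
  refine ⟨_, rfl, Real.sqrt_nonneg _, ?_, ?_⟩
  · rw [Real.sqrt_lt' hB]; nlinarith
  · linear_combination hc - hs

/-- For `ξ ≤ C` the two excluded ranges overlap, with union `1/(A+s) ≤ A + B y ≤ A + s`. -/
lemma integral_dens_small {l x : ℝ} (hl : 0 < l) (hx : 0 < x) (hxB : x ≤ Real.sinh l)
    (hxC : x ≤ 2 * Real.sinh (l / 2)) :
    ∫ y in (-1:ℝ)..1, dens l x y = 2 / x ^ 2 *
      (l - Real.log (Real.cosh l + Real.sqrt (Real.sinh l ^ 2 - x ^ 2))) := by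
  obtain ⟨s, hs, hs0, hsB, hprod⟩ := s_facts hl hx hxB
  rw [← hs]
  have hB : 0 < Real.sinh l := Real.sinh_pos_iff.2 hl
  have hc := Real.cosh_sq l
  have hBA := Real.sinh_lt_cosh l
  have hA1 := Real.one_le_cosh l
  have hC := four_sinh_half_sq l
  have hxC2 : x ^ 2 ≤ 2 * Real.cosh l - 2 := by rw [← hC]; gcongr
  set A := Real.cosh l
  set B := Real.sinh l
  have hm : A - s ≤ 1 := by nlinarith
  have hpos : 0 < A + s := by linarith
  have hposm : 0 < A - s := by linarith
  have hinv : (A + s) * (A + s)⁻¹ = 1 := mul_inv_cancel₀ hpos.ne'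
  set p := (A + s)⁻¹
  have hp0 : 0 < p := by positivity
  have b1 : A - B ≤ p := by
    have : (A - B) * (A + s) ≤ 1 := by nlinarith
    calc A - B = (A - B) * (A + s) * p := by rw [mul_assoc, hinv, mul_one]
      _ ≤ 1 * p := by gcongr
      _ = p := one_mul p
  have b2 : p ≤ A + s := by
    have : p ≤ 1 := inv_le_one_of_one_le₀ (by linarith)
    linarith
  have q1 : ∀ D, (1 + x ^ 2) * D ^ 2 - 2 * A * D + 1 = ((A + s) * D - 1) * ((A - s) * D - 1) := by
    intro D; rw [← hprod]; ring
  have q2 : ∀ D, D ^ 2 - 2 * A * D + 1 + x ^ 2 = (D - (A - s)) * (D - (A + s)) := by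
    intro D; linear_combination -hprod
  have i1 := integral_dens_on hl hx le_rfl b1 (by linarith) (by
    intro D h1 h2
    have h3 : (A + s) * D < 1 := by rw [← hinv]; gcongr
    have hD : 0 < D := by linarith
    rw [q1, q2]
    have h5 : (A - s) * D ≤ (A + s) * D := by gcongr; linarith
    have h6 : D < A - s := by
      have : D * (A + s) < (A - s) * (A + s) := by nlinarith [sq_pos_of_pos hx]
      exact lt_of_mul_lt_mul_right this hpos.le
    constructor
    · apply mul_pos_of_neg_of_neg <;> linarith
    · apply mul_pos_of_neg_of_neg <;> linarith)
  have i2 := integral_dens_off hl hx b1 b2 (by linarith) (by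
    intro D h1 h2
    rw [q1, q2]
    have h3 : 1 < (A + s) * D := by rw [← hinv]; gcongr
    have hD : 0 < D := by linarith
    rcases le_total D 1 with hD1 | hD1
    · left
      apply mul_nonpos_of_nonneg_of_nonpos
      · linarith
      · nlinarith
    · right
      apply mul_nonpos_of_nonneg_of_nonpos <;> linarith)
  have i3 := integral_dens_on hl hx (by linarith : A - B ≤ A + s) (by linarith) le_rfl (by
    intro D h1 h2
    rw [q1, q2]
    have hD : 0 < D := by linarith
    constructor
    · have : 1 < (A - s) * D := by nlinarith [sq_pos_of_pos hx]
      have : (A - s) * D ≤ (A + s) * D := by gcongr; linarith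
      apply mul_pos <;> linarith
    · apply mul_pos <;> linarith)
  rw [yOf_left hl] at i1
  rw [yOf_right hl] at i3
  have e := integral_dens_add hl hx (by linarith : A - B ≤ A + s)
    (by linarith : A + s ≤ A + B) le_rfl
  rw [yOf_right hl] at e
  rw [e, integral_dens_add hl hx b1 b2 (by linarith), i1, i2, i3, log_left, log_right, Real.log_inv]
  ring

/-- For `C ≤ ξ ≤ B` the excluded ranges `[1/(A+s), 1/(A-s)]` and `[A-s, A+s]` share
at most a point. -/
lemma integral_dens_mid {l x : ℝ} (hl : 0 < l) (hx : 0 < x) (hxB : x ≤ Real.sinh l)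
    (hxC : 2 * Real.sinh (l / 2) ≤ x) :
    ∫ y in (-1:ℝ)..1, dens l x y = 2 / x ^ 2 * (l + Real.log (1 + x ^ 2) -
      2 * Real.log (Real.cosh l + Real.sqrt (Real.sinh l ^ 2 - x ^ 2))) := by
  obtain ⟨s, hs, hs0, hsB, hprod⟩ := s_facts hl hx hxB
  rw [← hs]
  have hB : 0 < Real.sinh l := Real.sinh_pos_iff.2 hl
  have hc := Real.cosh_sq l
  have hBA := Real.sinh_lt_cosh l
  have hA1 := Real.one_le_cosh l
  have hC := four_sinh_half_sq l
  have hC0 : 0 < Real.sinh (l / 2) := Real.sinh_pos_iff.2 (by linarith)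
  have hxC2 : 2 * Real.cosh l - 2 ≤ x ^ 2 := by rw [← hC]; gcongr
  set A := Real.cosh l
  set B := Real.sinh l
  have hm : 1 ≤ A - s := by nlinarith
  have hpos : 0 < A + s := by linarith
  have hposm : 0 < A - s := by linarith
  have hinv : (A + s) * (A + s)⁻¹ = 1 := mul_inv_cancel₀ hpos.ne'
  have hinvm : (A - s) * (A - s)⁻¹ = 1 := mul_inv_cancel₀ hposm.ne'
  have b2 : (A + s)⁻¹ ≤ (A - s)⁻¹ := by gcongr; linarith
  have b3 : (A - s)⁻¹ ≤ A - s := by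
    have : (A - s)⁻¹ ≤ 1 := inv_le_one_of_one_le₀ hm
    linarith
  have hlog : Real.log (1 + x ^ 2) = Real.log (A + s) + Real.log (A - s) := by
    rw [← hprod, Real.log_mul hpos.ne' hposm.ne']
  have lp : Real.log (A + s)⁻¹ = -Real.log (A + s) := Real.log_inv _
  have lq : Real.log (A - s)⁻¹ = -Real.log (A - s) := Real.log_inv _
  set p := (A + s)⁻¹
  set q := (A - s)⁻¹
  have hp0 : 0 < p := by positivity
  have hq0 : 0 < q := by positivity
  have b1 : A - B ≤ p := by
    have : (A - B) * (A + s) ≤ 1 := by nlinarith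
    calc A - B = (A - B) * (A + s) * p := by rw [mul_assoc, hinv, mul_one]
      _ ≤ 1 * p := by gcongr
      _ = p := one_mul p
  have q1 : ∀ D, (1 + x ^ 2) * D ^ 2 - 2 * A * D + 1 = ((A + s) * D - 1) * ((A - s) * D - 1) := by
    intro D; rw [← hprod]; ring
  have q2 : ∀ D, D ^ 2 - 2 * A * D + 1 + x ^ 2 = (D - (A - s)) * (D - (A + s)) := by
    intro D; linear_combination -hprod
  have i1 := integral_dens_on hl hx le_rfl b1 (by linarith) (by
    intro D h1 h2
    have h3 : (A + s) * D < 1 := by rw [← hinv]; gcongr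
    have hD : 0 < D := by linarith
    rw [q1, q2]
    have h5 : (A - s) * D ≤ (A + s) * D := by gcongr; linarith
    constructor
    · apply mul_pos_of_neg_of_neg <;> linarith
    · apply mul_pos_of_neg_of_neg <;> linarith)
  have i2 := integral_dens_off hl hx b1 b2 (by linarith) (by
    intro D h1 h2
    left
    rw [q1]
    have h3 : 1 < (A + s) * D := by rw [← hinv]; gcongr
    have h4 : (A - s) * D < 1 := by rw [← hinvm]; gcongr
    apply mul_nonpos_of_nonneg_of_nonpos <;> linarith)
  have i3 := integral_dens_on hl hx (by linarith : A - B ≤ q) b3 (by linarith) (by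
    intro D h1 h2
    rw [q1, q2]
    have hD : 0 < D := by linarith
    have h4 : 1 < (A - s) * D := by rw [← hinvm]; gcongr
    have h5 : (A - s) * D ≤ (A + s) * D := by gcongr; linarith
    constructor
    · apply mul_pos <;> linarith
    · apply mul_pos_of_neg_of_neg <;> linarith)
  have i4 := integral_dens_off hl hx (by linarith : A - B ≤ A - s) (by linarith : A - s ≤ A + s)
    (by linarith) (by
    intro D h1 h2
    right
    rw [q2]
    apply mul_nonpos_of_nonneg_of_nonpos <;> linarith)
  have i5 := integral_dens_on hl hx (by linarith : A - B ≤ A + s) (by linarith) le_rfl (by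
    intro D h1 h2
    rw [q1, q2]
    have hD : 0 < D := by linarith
    constructor
    · have : 1 < (A - s) * D := by nlinarith [sq_pos_of_pos hx]
      have : (A - s) * D ≤ (A + s) * D := by gcongr; linarith
      apply mul_pos <;> linarith
    · apply mul_pos <;> linarith)
  rw [yOf_left hl] at i1
  rw [yOf_right hl] at i5
  have e := integral_dens_add hl hx (by linarith : A - B ≤ A + s)
    (by linarith : A + s ≤ A + B) le_rfl
  rw [yOf_right hl] at e
  rw [e, integral_dens_add hl hx (by linarith : A - B ≤ A - s) (by linarith) (by linarith : A + s ≤ _),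
    integral_dens_add hl hx (by linarith : A - B ≤ q) b3 (by linarith),
    integral_dens_add hl hx b1 b2 (by linarith), i1, i2, i3, i4, i5, log_left, log_right, lp, lq,
    hlog]
  ring

lemma integral_dens_eq_fxi {l x : ℝ} (hl : 0 < l) (hx : 0 < x) :
    ∫ y in (-1:ℝ)..1, dens l x y = fxi x l := by
  unfold fxi
  split_ifs with h1 h2
  · rcases h1.lt_or_eq with h1 | h1
    · exact integral_dens_large hl h1
    · -- at `ξ = B` the middle formula applies with `s = 0`, and `1 + B² = A²`
      have hc := Real.cosh_sq l
      have hA1 := Real.one_le_cosh l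
      have hC0 : 0 < Real.sinh (l / 2) := Real.sinh_pos_iff.2 (by linarith)
      have hC : 2 * Real.sinh (l / 2) ≤ x := by
        rw [← sq_le_sq₀ (by positivity) hx.le, four_sinh_half_sq, ← h1]
        nlinarith
      rw [integral_dens_mid hl hx h1.ge hC, ← h1, sub_self, Real.sqrt_zero, add_zero,
        add_comm 1, ← hc, Real.log_pow]
      push_cast
      ring
  · exact integral_dens_mid hl hx (not_le.1 h1).le h2
  · exact integral_dens_small hl hx (not_le.1 h1).le (not_le.1 h2).le

end

/-- `F(ξ) → 0` as `ξ → 0⁺`, and `F′(ξ) = f_ξ(ℓ)` for every `ξ > 0`. -/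
theorem Ffun_deriv (l : ℝ) (hl : 0 < l) :
    Tendsto (fun ξ => Ffun l ξ) (𝓝[>] (0:ℝ)) (𝓝 0) ∧
    ∀ ξ : ℝ, 0 < ξ → HasDerivAt (fun x => Ffun l x) (fxi ξ l) ξ := by
  refine ⟨tendsto_Ffun l hl, fun ξ hξ => ?_⟩
  rw [← integral_dens_eq_fxi hl hξ]
  exact (hasDerivAt_Ffun_dens hl hξ).2
end
end
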